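/- arXiv:2507.04728 — 3 statements merged into one kernel-verified Lean document; each statement's English description precedes it below -/
import Mathlib

section
/- Let G~ be a connected mixed graph whose cycles are pairwise vertex-disjoint, with κ(G) = c(G) − 1 and c(G) ≥ 2, and suppose G~ has no pendant vertices and has a pendant odd cycle C~_q with odd signature. Let x be the unique vertex of degree 3 on C_q and let H~ = G~ − V(C_q) + x. Then r(G~) = 2m(G) − 2κ(G) if and only if r(H~) = 2m(H) − 2c(H). -/
open scoped Classical

namespace MixedPaper

universe u

/-- A mixed graph: a finite simple graph together with an orientation of a subset
of its edges.  `arc u v = true` means there is an arc from `u` to `v`. -/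
structure MixedGraph (V : Type u) where
  graph : SimpleGraph V
  arc : V → V → Bool
  arc_adj : ∀ u v, arc u v → graph.Adj u v
  arc_antisymm : ∀ u v, arc u v → ¬ arc v u

variable {V : Type u}

/-- The Hermitian adjacency matrix of a mixed graph. -/
noncomputable def MixedGraph.hMatrix [Fintype V] [DecidableEq V] (M : MixedGraph V) :
    Matrix V V ℂ := fun u v =>
  if M.arc u v then Complex.I
  else if M.arc v u then -Complex.I
  else if M.graph.Adj u v then 1 else 0

/-- The H-rank of a mixed graph: the rank of its Hermitian adjacency matrix. -/
noncomputable def MixedGraph.hRank [Fintype V] [DecidableEq V] (M : MixedGraph V) : ℕ :=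
  M.hMatrix.rank

/-- The matching number of a simple graph. -/
noncomputable def matchingNumber (G : SimpleGraph V) : ℕ :=
  sSup {k | ∃ N : G.Subgraph, N.IsMatching ∧ N.edgeSet.ncard = k}

/-- A subgraph is a cycle subgraph if it is connected and every one of its vertices
has exactly two neighbours in it. -/
def IsCycleSubgraph {G : SimpleGraph V} (C : G.Subgraph) : Prop :=
  C.Connected ∧ ∀ v ∈ C.verts, {w | C.Adj v w}.ncard = 2

/-- κ(G) : the number of even cycles of G. -/
noncomputable def evenCycleCount (G : SimpleGraph V) : ℕ :=
  {C : G.Subgraph | IsCycleSubgraph C ∧ Even C.verts.ncard}.ncard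

/-- c(G) = |E(G)| - |V(G)| + ω(G), the cyclomatic number. -/
noncomputable def cyclomatic [Fintype V] (G : SimpleGraph V) : ℤ :=
  (G.edgeSet.ncard : ℤ) - (Fintype.card V : ℤ) + (Nat.card G.ConnectedComponent : ℤ)

/-- The induced mixed subgraph on a set of vertices. -/
def MixedGraph.induce (M : MixedGraph V) (S : Set V) : MixedGraph S where
  graph := M.graph.induce S
  arc := fun a b => M.arc a.1 b.1
  arc_adj := fun a b h => M.arc_adj a.1 b.1 h
  arc_antisymm := fun a b h => M.arc_antisymm a.1 b.1 h

/-- The mixed subgraph induced by a connected component of the underlying graph. -/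
def MixedGraph.comp (M : MixedGraph V) (c : M.graph.ConnectedComponent) :
    MixedGraph c.supp := M.induce c.supp

/-- The signature |f - b| of a closed walk in a mixed graph: the absolute difference
between the numbers of forward and backward arcs along the walk. -/
def walkSignature (M : MixedGraph V) {u : V} (w : M.graph.Walk u u) : ℕ :=
  ((w.darts.countP fun d => M.arc d.toProd.1 d.toProd.2 : ℤ) -
    (w.darts.countP fun d => M.arc d.toProd.2 d.toProd.1 : ℤ)).natAbs

/-- The signature of the cycle subgraph `C` of the mixed graph `M` satisfies the
predicate `P` (expressed via a closed walk traversing `C`; the signature does not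
depend on the choice of traversal). -/
def CycleSig (M : MixedGraph V) (C : M.graph.Subgraph) (P : ℕ → Prop) : Prop :=
  ∃ (u : V) (w : M.graph.Walk u u), w.IsCycle ∧
    {v | v ∈ w.support} = C.verts ∧ {e | e ∈ w.edges} = C.edgeSet ∧
    P (walkSignature M w)

/-- `C` is a pendant cycle with unique vertex `x` of degree 3. -/
def IsPendantCycle (G : SimpleGraph V) (C : G.Subgraph) (x : V) : Prop :=
  IsCycleSubgraph C ∧ x ∈ C.verts ∧ {w | G.Adj x w}.ncard = 3 ∧
    ∀ v ∈ C.verts, v ≠ x → {w | G.Adj v w}.ncard = 2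

/-- G has no pendant vertices (vertices of degree 1). -/
def NoPendantVerts (G : SimpleGraph V) : Prop := ∀ u : V, {w | G.Adj u w}.ncard ≠ 1

/-- The (distinct) cycles of G are pairwise vertex-disjoint. -/
def CyclesVertexDisjoint (G : SimpleGraph V) : Prop :=
  ∀ C₁ C₂ : G.Subgraph, IsCycleSubgraph C₁ → IsCycleSubgraph C₂ → C₁ ≠ C₂ →
    Disjoint C₁.verts C₂.verts

/-- The (distinct) even cycles of G are pairwise vertex-disjoint. -/
def EvenCyclesVertexDisjoint (G : SimpleGraph V) : Prop :=
  ∀ C₁ C₂ : G.Subgraph, IsCycleSubgraph C₁ → IsCycleSubgraph C₂ →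
    Even C₁.verts.ncard → Even C₂.verts.ncard → C₁ ≠ C₂ →
    Disjoint C₁.verts C₂.verts

/-- One pendant `K₂` deletion step, recorded on the surviving vertex sets:
`u` is pendant in the graph induced on `S` with unique neighbour `v` there,
and both are deleted. -/
def PendantStep (G : SimpleGraph V) (S T : Set V) : Prop :=
  ∃ u v, u ∈ S ∧ v ∈ S ∧ {w | w ∈ S ∧ G.Adj u w} = {v} ∧ T = S \ {u, v}

/-- `S` is reachable from the full vertex set by a sequence of pendant K₂ deletions. -/
def PendantReaches (G : SimpleGraph V) (S : Set V) : Prop :=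
  Relation.ReflTransGen (PendantStep G) Set.univ S

/-- The graph induced on `S` has no pendant vertices. -/
def NoPendantIn (G : SimpleGraph V) (S : Set V) : Prop :=
  ∀ u ∈ S, {w | w ∈ S ∧ G.Adj u w}.ncard ≠ 1

/-- `u` lies on some even cycle of `G`. -/
def OnEvenCycle (G : SimpleGraph V) (u : V) : Prop :=
  ∃ C : G.Subgraph, IsCycleSubgraph C ∧ Even C.verts.ncard ∧ u ∈ C.verts

/-- G is the graph ∞(p,1,q): two cycles of lengths p and q sharing exactly one vertex. -/
def IsInfinityGraph (G : SimpleGraph V) (p q : ℕ) : Prop :=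
  ∃ C₁ C₂ : G.Subgraph, IsCycleSubgraph C₁ ∧ IsCycleSubgraph C₂ ∧
    C₁.verts.ncard = p ∧ C₂.verts.ncard = q ∧
    (C₁.verts ∩ C₂.verts).ncard = 1 ∧ C₁ ⊔ C₂ = ⊤

/-- G is the theta graph θ(p,l,q): three internally disjoint paths with p, l, q
vertices respectively, joining two common endvertices. -/
def IsThetaGraph (G : SimpleGraph V) (p l q : ℕ) : Prop :=
  2 ≤ p ∧ 2 ≤ l ∧ 2 ≤ q ∧ ¬(p = 2 ∧ l = 2) ∧ ¬(p = 2 ∧ q = 2) ∧ ¬(l = 2 ∧ q = 2) ∧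
  ∃ (a b : V) (W₁ W₂ W₃ : G.Walk a b), W₁.IsPath ∧ W₂.IsPath ∧ W₃.IsPath ∧
    W₁.length = p - 1 ∧ W₂.length = l - 1 ∧ W₃.length = q - 1 ∧
    (∀ v : V, v ∈ W₁.support ∨ v ∈ W₂.support ∨ v ∈ W₃.support) ∧
    (∀ e ∈ G.edgeSet, e ∈ W₁.edges ∨ e ∈ W₂.edges ∨ e ∈ W₃.edges) ∧
    {v | v ∈ W₁.support ∧ v ∈ W₂.support} = {a, b} ∧
    {v | v ∈ W₁.support ∧ v ∈ W₃.support} = {a, b} ∧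
    {v | v ∈ W₂.support ∧ v ∈ W₃.support} = {a, b}

/-- Every odd cycle of `M` has signature satisfying `P`. -/
def OddCyclesSig (M : MixedGraph V) (P : ℕ → Prop) : Prop :=
  ∀ C : M.graph.Subgraph, IsCycleSubgraph C → Odd C.verts.ncard → CycleSig M C P

/-- Every even cycle of `M`, of length `n`, has signature `s` satisfying `P n s`. -/
def EvenCyclesSig (M : MixedGraph V) (P : ℕ → ℕ → Prop) : Prop :=
  ∀ C : M.graph.Subgraph, IsCycleSubgraph C → Even C.verts.ncard →
    CycleSig M C (P C.verts.ncard)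

/-- The whole mixed graph is a single cycle. -/
def IsCycleMG (M : MixedGraph V) : Prop := IsCycleSubgraph (⊤ : M.graph.Subgraph)

/-- The family 𝔊₀. -/
def MemG0 [Fintype V] [DecidableEq V] (M : MixedGraph V) : Prop :=
  M.graph.Connected ∧ 1 ≤ cyclomatic M.graph ∧ CyclesVertexDisjoint M.graph ∧
  NoPendantVerts M.graph ∧
  ∃ (C : M.graph.Subgraph) (x : V), IsPendantCycle M.graph C x ∧ Odd C.verts.ncard ∧
    CycleSig M C Odd ∧
    ((M.induce (C.vertsᶜ ∪ {x})).hRank : ℤ) =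
      2 * (matchingNumber (M.induce (C.vertsᶜ ∪ {x})).graph : ℤ) -
        2 * cyclomatic (M.induce (C.vertsᶜ ∪ {x})).graph

/-- The family 𝔛₁ : mixed ∞(p,1,q)-graphs, p even, q odd, whose odd cycle has odd
signature and whose even cycle C̃_p satisfies σ ≡ p (mod 4). -/
def MemX1 (M : MixedGraph V) : Prop :=
  ∃ p q : ℕ, Even p ∧ Odd q ∧ IsInfinityGraph M.graph p q ∧
    OddCyclesSig M Odd ∧ EvenCyclesSig M (fun n s => s % 4 = n % 4)

/-- The family 𝔛₂ : mixed θ(p,l,q)-graphs, p even, l q odd, whose two odd cycles have odd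
signatures and whose even cycle C̃_{q+l-2} satisfies q + l + σ ≡ 2 (mod 4). -/
def MemX2 (M : MixedGraph V) : Prop :=
  ∃ p l q : ℕ, Even p ∧ Odd l ∧ Odd q ∧ IsThetaGraph M.graph p l q ∧
    OddCyclesSig M Odd ∧ EvenCyclesSig M (fun _ s => (q + l + s) % 4 = 2)

/-- The family 𝔊₂ = 𝔊₀ ∪ 𝔛₁ ∪ 𝔛₂ together with the mixed odd cycles of odd signature. -/
def MemG2 [Fintype V] [DecidableEq V] (M : MixedGraph V) : Prop :=
  MemG0 M ∨ MemX1 M ∨ MemX2 M ∨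
    (IsCycleMG M ∧ Odd (Nat.card V) ∧ CycleSig M ⊤ Odd)

/-- The family 𝔜₁. -/
def MemY1 (M : MixedGraph V) : Prop :=
  ∃ p q : ℕ, Even p ∧ Odd q ∧ IsInfinityGraph M.graph p q ∧
    OddCyclesSig M Even ∧ EvenCyclesSig M (fun n s => s % 4 = n % 4)

/-- The family 𝔜₂. -/
def MemY2 (M : MixedGraph V) : Prop :=
  ∃ p l q : ℕ, Even p ∧ Odd l ∧ Odd q ∧ IsThetaGraph M.graph p l q ∧
    OddCyclesSig M Even ∧ EvenCyclesSig M (fun _ s => (q + l + s) % 4 = 2)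

/-- `M` is a disjoint union of `k` even cycles and one odd cycle with even signature. -/
def IsDisjointUnionEvenCyclesOddCycleEvenSig (M : MixedGraph V) (k : ℤ) : Prop :=
  (∀ c : M.graph.ConnectedComponent, IsCycleMG (M.comp c)) ∧
  (({c : M.graph.ConnectedComponent | Even (Nat.card c.supp)}.ncard : ℤ) = k) ∧
  (∃! c : M.graph.ConnectedComponent, Odd (Nat.card c.supp)) ∧
  (∀ c : M.graph.ConnectedComponent, Odd (Nat.card c.supp) →
    CycleSig (M.comp c) ⊤ Even)

/-- The family 𝔉₀. -/
def MemF0 [Fintype V] [DecidableEq V] (M : MixedGraph V) : Prop :=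
  M.graph.Connected ∧ 2 ≤ cyclomatic M.graph ∧ CyclesVertexDisjoint M.graph ∧
  NoPendantVerts M.graph ∧
  (∃ (C₀ : M.graph.Subgraph) (x₀ : V), IsPendantCycle M.graph C₀ x₀ ∧ Odd C₀.verts.ncard ∧
    CycleSig M C₀ Even ∧
    ∀ C : M.graph.Subgraph, IsCycleSubgraph C → C ≠ C₀ →
      Even C.verts.ncard ∧ CycleSig M C (fun s => s % 4 = C.verts.ncard % 4)) ∧
  (∃ (Cq : M.graph.Subgraph) (x : V), IsPendantCycle M.graph Cq x ∧ Even Cq.verts.ncard ∧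
    ∃ S : Set ↥(Cq.vertsᶜ ∪ {x}),
      PendantReaches (M.induce (Cq.vertsᶜ ∪ {x})).graph S ∧
      NoPendantIn (M.induce (Cq.vertsᶜ ∪ {x})).graph S ∧
      IsDisjointUnionEvenCyclesOddCycleEvenSig
        ((M.induce (Cq.vertsᶜ ∪ {x})).induce S)
        (cyclomatic (M.induce (Cq.vertsᶜ ∪ {x})).graph))

/-- The family 𝔉₂ = 𝔉₀ ∪ 𝔜₁ ∪ 𝔜₂ together with the mixed odd cycles of even signature. -/
def MemF2 [Fintype V] [DecidableEq V] (M : MixedGraph V) : Prop :=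
  MemF0 M ∨ MemY1 M ∨ MemY2 M ∨
    (IsCycleMG M ∧ Odd (Nat.card V) ∧ CycleSig M ⊤ Even)

/-- A connected component that is either an even cycle C̃_q with σ ≡ q (mod 4),
or an isolated vertex. -/
def GoodOtherComp (M : MixedGraph V) : Prop :=
  (IsCycleMG M ∧ Even (Nat.card V) ∧
    CycleSig M ⊤ (fun s => s % 4 = (Nat.card V) % 4)) ∨
  Nat.card V = 1

/-- A fractional matching of `G`, given as a weight function on `Sym2 V` vanishing
outside the edge set. -/
def IsFracMatching [Fintype V] [DecidableEq V] (G : SimpleGraph V) (f : Sym2 V → ℝ) : Prop :=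
  (∀ e ∈ G.edgeSet, 0 ≤ f e ∧ f e ≤ 1) ∧ (∀ e, e ∉ G.edgeSet → f e = 0) ∧
    ∀ v : V, ∑ e ∈ Finset.univ.filter (fun e : Sym2 V => v ∈ e), f e ≤ 1

/-- The fractional matching number m*(G). -/
noncomputable def fracMatchingNumber [Fintype V] [DecidableEq V] (G : SimpleGraph V) : ℝ :=
  sSup {x : ℝ | ∃ f : Sym2 V → ℝ, IsFracMatching G f ∧ ∑ e : Sym2 V, f e = x}

/-- Membership in the family ℱ : fractional matchings of total weight m*(G) taking
values in {0, 1/2, 1}. -/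
def InOptFamily [Fintype V] [DecidableEq V] (G : SimpleGraph V) (f : Sym2 V → ℝ) : Prop :=
  IsFracMatching G f ∧ (∑ e : Sym2 V, f e) = fracMatchingNumber G ∧
    ∀ e : Sym2 V, f e = 0 ∨ f e = 1 / 2 ∨ f e = 1

/-- An optimal fractional matching: a member of ℱ with the largest number of
edges of weight 1. -/
def IsOptFracMatching [Fintype V] [DecidableEq V] (G : SimpleGraph V) (f : Sym2 V → ℝ) : Prop :=
  InOptFamily G f ∧
    ∀ g : Sym2 V → ℝ, InOptFamily G g →
      {e : Sym2 V | g e = 1}.ncard ≤ {e : Sym2 V | f e = 1}.ncard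

/-- E₁(C) : the edges of `G` with exactly one endpoint on the cycle `C`. -/
def cutEdges (G : SimpleGraph V) (C : G.Subgraph) : Set (Sym2 V) :=
  {e | e ∈ G.edgeSet ∧ ∃ a b : V, e = s(a, b) ∧ a ∈ C.verts ∧ b ∉ C.verts}



/-- Parametrisation of a pendant odd cycle. -/
structure PendCyc (G : SimpleGraph V) (S : Set V) (x : V) (k : ℕ) (p : ℕ → V) : Prop where
  hk : 1 ≤ k
  p0 : p 0 = x
  pl : p (2 * k + 1) = x
  inj : ∀ i j, i ≤ 2 * k → j ≤ 2 * k → p i = p j → i = j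
  adj : ∀ t, t ≤ 2 * k → G.Adj (p t) (p (t + 1))
  nb : ∀ t, 1 ≤ t → t ≤ 2 * k → ∀ w, G.Adj (p t) w → w = p (t - 1) ∨ w = p (t + 1)
  mem : ∀ v, v ∈ S ↔ ∀ t, 1 ≤ t → t ≤ 2 * k → v ≠ p t

theorem PendCyc.inj2 {G : SimpleGraph V} {S : Set V} {x : V} {k : ℕ} {p : ℕ → V}
    (h : PendCyc G S x k p) (i j : ℕ) (hi : i ≤ 2 * k + 1) (hj : j ≤ 2 * k + 1)
    (e : p i = p j) : i = j ∨ (i = 0 ∧ j = 2 * k + 1) ∨ (i = 2 * k + 1 ∧ j = 0) := by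
  have hk := h.hk
  rcases Nat.lt_or_ge (2 * k) i with h1 | h1 <;> rcases Nat.lt_or_ge (2 * k) j with h2 | h2
  · omega
  · have hi' : i = 2 * k + 1 := by omega
    subst hi'
    rw [h.pl, ← h.p0] at e
    have := h.inj 0 j (by omega) h2 e
    omega
  · have hj' : j = 2 * k + 1 := by omega
    subst hj'
    rw [h.pl, ← h.p0] at e
    have := h.inj i 0 h1 (by omega) e
    omega
  · exact Or.inl (h.inj i j h1 h2 e)

theorem PendCyc.x_mem {G : SimpleGraph V} {S : Set V} {x : V} {k : ℕ} {p : ℕ → V}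
    (h : PendCyc G S x k p) : x ∈ S := by
  rw [h.mem]
  intro t h1 h2 e
  rw [← h.p0] at e
  have := h.inj 0 t (by omega) h2 e
  omega

theorem PendCyc.not_mem {G : SimpleGraph V} {S : Set V} {x : V} {k : ℕ} {p : ℕ → V}
    (h : PendCyc G S x k p) (t : ℕ) (h1 : 1 ≤ t) (h2 : t ≤ 2 * k) : p t ∉ S := by
  rw [h.mem]
  intro h3
  exact h3 t h1 h2 rfl

theorem PendCyc.ex {G : SimpleGraph V} {S : Set V} {x : V} {k : ℕ} {p : ℕ → V}
    (h : PendCyc G S x k p) (v : V) (hv : v ∉ S) : ∃ t, 1 ≤ t ∧ t ≤ 2 * k ∧ v = p t := by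
  rw [h.mem] at hv
  push Not at hv
  exact hv

theorem PendCyc.idx_of_mem {G : SimpleGraph V} {S : Set V} {x : V} {k : ℕ} {p : ℕ → V}
    (h : PendCyc G S x k p) (t : ℕ) (h2 : t ≤ 2 * k + 1) (hm : p t ∈ S) :
    p t = x ∧ (t = 0 ∨ t = 2 * k + 1) := by
  rcases Nat.eq_zero_or_pos t with h0 | h0
  · subst h0; exact ⟨h.p0, Or.inl rfl⟩
  · rcases Nat.lt_or_ge (2 * k) t with h3 | h3
    · have : t = 2 * k + 1 := by omega
      subst this; exact ⟨h.pl, Or.inr rfl⟩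
    · exact absurd hm (h.not_mem t h0 h3)

/-- a vertex of `S` adjacent to a deleted vertex is `x`, and the index is extremal -/
theorem PendCyc.adj_mem {G : SimpleGraph V} {S : Set V} {x : V} {k : ℕ} {p : ℕ → V}
    (h : PendCyc G S x k p) (t : ℕ) (h1 : 1 ≤ t) (h2 : t ≤ 2 * k) (v : V) (hv : v ∈ S)
    (ha : G.Adj (p t) v) : v = x ∧ (t = 1 ∨ t = 2 * k) := by
  rcases h.nb t h1 h2 v ha with e | e
  · subst e
    have := h.idx_of_mem (t - 1) (by omega) hv
    refine ⟨this.1, ?_⟩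
    omega
  · subst e
    have := h.idx_of_mem (t + 1) (by omega) hv
    refine ⟨this.1, ?_⟩
    omega

section LA
variable [Fintype V] {G : SimpleGraph V} {S : Set V} {x : V} {k : ℕ} {p : ℕ → V}

theorem sum_path (h : PendCyc G S x k p) (A : Matrix V V ℂ)
    (hA0 : ∀ u v, ¬ G.Adj u v → A u v = 0) (f : V → ℂ) (s : ℕ) (hs : s < 2 * k) :
    ∑ w, A (p (s + 1)) w * f w =
      A (p (s + 1)) (p s) * f (p s) + A (p (s + 1)) (p (s + 2)) * f (p (s + 2)) := by
  have hk := h.hk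
  apply Finset.sum_eq_add (p s) (p (s + 2))
  · intro e
    have := h.inj2 s (s + 2) (by omega) (by omega) e
    omega
  · intro w _ hw
    rw [hA0, zero_mul]
    intro ha
    rcases h.nb (s + 1) (by omega) (by omega) w ha with e | e
    · exact hw.1 e
    · exact hw.2 e
  · simp
  · simp

theorem sum_mem (h : PendCyc G S x k p) [Fintype S] (A : Matrix V V ℂ)
    (hA0 : ∀ u v, ¬ G.Adj u v → A u v = 0) (f : V → ℂ) (v : V) (hv : v ∈ S) (hx : v ≠ x) :
    ∑ w, A v w * f w = ∑ w : S, A v w * f w := by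
  rw [← Finset.sum_filter_add_sum_filter_not Finset.univ (fun w => w ∈ S)]
  rw [Finset.sum_subtype (p := fun w => w ∈ S) (F := inferInstanceAs (Fintype S))
    (Finset.univ.filter (fun w => w ∈ S)) (by simp)]
  rw [Finset.sum_eq_zero (s := Finset.univ.filter (fun w => w ∉ S)), add_zero]
  intro w hw
  simp only [Finset.mem_filter, Finset.mem_univ, true_and] at hw
  obtain ⟨t, h1, h2, rfl⟩ := h.ex w hw
  rw [hA0, zero_mul]
  intro ha
  exact hx (h.adj_mem t h1 h2 v hv ha.symm).1

theorem sum_x (h : PendCyc G S x k p) [Fintype S] (A : Matrix V V ℂ)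
    (hA0 : ∀ u v, ¬ G.Adj u v → A u v = 0) (f : V → ℂ) :
    ∑ w, A x w * f w = ∑ w : S, A x w * f w +
      (A x (p 1) * f (p 1) + A x (p (2 * k)) * f (p (2 * k))) := by
  have hk := h.hk
  rw [← Finset.sum_filter_add_sum_filter_not Finset.univ (fun w => w ∈ S)]
  rw [Finset.sum_subtype (p := fun w => w ∈ S) (F := inferInstanceAs (Fintype S))
    (Finset.univ.filter (fun w => w ∈ S)) (by simp)]
  rw [Finset.sum_eq_add (s := Finset.univ.filter (fun w => w ∉ S)) (p 1) (p (2 * k))]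
  · intro e
    have := h.inj 1 (2 * k) (by omega) (by omega) e
    omega
  · intro w hw hne
    simp only [Finset.mem_filter, Finset.mem_univ, true_and] at hw
    obtain ⟨t, h1, h2, rfl⟩ := h.ex w hw
    rw [hA0, zero_mul]
    intro ha
    rcases (h.adj_mem t h1 h2 x h.x_mem ha.symm).2 with e | e
    · subst e; exact hne.1 rfl
    · subst e; exact hne.2 rfl
  · intro hc
    simp only [Finset.mem_filter, Finset.mem_univ, true_and] at hc
    exact absurd (h.not_mem 1 (by omega) (by omega)) hc
  · intro hc
    simp only [Finset.mem_filter, Finset.mem_univ, true_and] at hc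
    exact absurd (h.not_mem (2 * k) (by omega) (by omega)) hc

/-- the pure recurrence along the path -/
theorem recur (a b F : ℕ → ℂ) (k : ℕ) (hab : ∀ t, t ≤ 2 * k → a t * b t = 1)
    (heq : ∀ s, s < 2 * k → b s * F s + a (s + 1) * F (s + 2) = 0) :
    ∀ j, j ≤ k → (∏ s ∈ Finset.range (2 * j), a s) * F (2 * j) = (-1) ^ j * F 0 ∧
      (∏ s ∈ Finset.range (2 * j + 1), a s) * F (2 * j + 1) = (-1) ^ j * (a 0 * F 1) ∨ k < j := by
  have main : ∀ s, s < 2 * k → (∏ t ∈ Finset.range (s + 2), a t) * F (s + 2) =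
      - ((∏ t ∈ Finset.range s, a t) * F s) := by
    intro s hs
    rw [Finset.prod_range_succ, Finset.prod_range_succ]
    have h1 := hab s (by omega)
    have h2 := heq s hs
    linear_combination ((∏ t ∈ Finset.range s, a t) * a s) * h2 -
      ((∏ t ∈ Finset.range s, a t) * F s) * h1
  intro j
  induction j with
  | zero => intro _; left; simp
  | succ j ih =>
    intro hj
    left
    rcases ih (by omega) with ⟨h1, h2⟩ | h3
    · constructor
      · have := main (2 * j) (by omega)
        rw [show 2 * (j + 1) = 2 * j + 2 by ring, this, h1]
        ring
      · have := main (2 * j + 1) (by omega)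
        rw [show 2 * (j + 1) + 1 = 2 * j + 1 + 2 by ring, this, h2]
        ring
    · omega

theorem corr_zero (a b F : ℕ → ℂ) (k : ℕ) (hab : ∀ t, t ≤ 2 * k → a t * b t = 1)
    (heq : ∀ s, s < 2 * k → b s * F s + a (s + 1) * F (s + 2) = 0)
    (hF : F (2 * k + 1) = F 0)
    (hW : (∏ s ∈ Finset.range (2 * k + 1), a s) ^ 2 = -1) :
    a 0 * F 1 + b (2 * k) * F (2 * k) = 0 := by
  rcases recur a b F k hab heq k le_rfl with ⟨h1, h2⟩ | h3
  swap
  · omega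
  rw [hF] at h2
  have h3 := hab (2 * k) le_rfl
  rw [Finset.prod_range_succ] at h2 hW
  set P := ∏ s ∈ Finset.range (2 * k), a s with hP
  have hs : ((-1 : ℂ) ^ k) * (-1) ^ k = 1 := by
    rw [← mul_pow]; simp
  have hne : P * a (2 * k) ≠ 0 := by
    intro h0
    rw [h0] at hW
    norm_num at hW
  have e1 : a 0 * F 1 = (-1) ^ k * (P * a (2 * k)) * F 0 := by
    linear_combination (-(-1) ^ k) * h2 - (a 0 * F 1) * hs
  apply mul_left_cancel₀ hne
  rw [e1]
  linear_combination (P * F (2 * k)) * h3 + h1 + ((-1) ^ k * F 0) * hW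

theorem F_zero (a b F : ℕ → ℂ) (k : ℕ) (hab : ∀ t, t ≤ 2 * k → a t * b t = 1)
    (heq : ∀ s, s < 2 * k → b s * F s + a (s + 1) * F (s + 2) = 0)
    (hF : F (2 * k + 1) = F 0) (h0 : F 0 = 0) : ∀ t, t ≤ 2 * k → F t = 0 := by
  have hne : ∀ n, n ≤ 2 * k + 1 → (∏ s ∈ Finset.range n, a s) ≠ 0 := by
    intro n hn
    rw [Finset.prod_ne_zero_iff]
    intro t ht
    rw [Finset.mem_range] at ht
    exact left_ne_zero_of_mul_eq_one (hab t (by omega))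
  have h1 : a 0 * F 1 = 0 := by
    rcases recur a b F k hab heq k le_rfl with ⟨_, h2⟩ | h3
    · rw [hF, h0, mul_zero] at h2
      have := h2.symm
      simpa using this
    · omega
  intro t ht
  rcases Nat.even_or_odd' t with ⟨j, rfl | rfl⟩
  · rcases recur a b F k hab heq j (by omega) with ⟨h2, _⟩ | h3
    · rw [h0, mul_zero] at h2
      exact (mul_eq_zero.1 h2).resolve_left (hne _ (by omega))
    · omega
  · rcases recur a b F k hab heq j (by omega) with ⟨_, h2⟩ | h3
    · rw [h1, mul_zero] at h2
      exact (mul_eq_zero.1 h2).resolve_left (hne _ (by omega))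
    · omega

theorem exists_F (a b : ℕ → ℂ) (k : ℕ) (c : ℂ) (hab : ∀ t, t ≤ 2 * k → a t * b t = 1) :
    ∃ F : ℕ → ℂ, F 0 = c ∧ F (2 * k + 1) = c ∧
      ∀ s, s < 2 * k → b s * F s + a (s + 1) * F (s + 2) = 0 := by
  refine ⟨fun t => (∏ s ∈ Finset.range t, b s) * ((-1) ^ (t / 2) *
    (if t % 2 = 0 then 1 else (-1) ^ k * ∏ s ∈ Finset.range (2 * k + 1), a s)) * c, ?_, ?_, ?_⟩
  · simp
  · have e1 : (2 * k + 1) / 2 = k := by omega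
    have e2 : (2 * k + 1) % 2 = 1 := by omega
    have e3 : (∏ s ∈ Finset.range (2 * k + 1), a s) * (∏ s ∈ Finset.range (2 * k + 1), b s) = 1 := by
      rw [← Finset.prod_mul_distrib]
      apply Finset.prod_eq_one
      intro t ht
      rw [Finset.mem_range] at ht
      exact hab t (by omega)
    have hs : ((-1 : ℂ) ^ k) * (-1) ^ k = 1 := by
      rw [← mul_pow]; simp
    simp only [e1, e2, one_ne_zero, if_false]
    linear_combination c * e3 + c * ((∏ s ∈ Finset.range (2 * k + 1), a s) *
      (∏ s ∈ Finset.range (2 * k + 1), b s)) * hs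
  · intro s hs
    have e1 : (s + 2) / 2 = s / 2 + 1 := by omega
    have e2 : (s + 2) % 2 = s % 2 := by omega
    have h1 := hab (s + 1) (by omega)
    simp only [e1, e2, Finset.prod_range_succ _ (s + 1), Finset.prod_range_succ _ s, pow_succ]
    generalize (if s % 2 = 0 then (1 : ℂ) else (-1) ^ k * ∏ s ∈ Finset.range (2 * k + 1), a s) = y
    linear_combination (-(∏ s ∈ Finset.range s, b s) * b s * (-1) ^ (s / 2) * y * c) * h1

theorem rank_red (h : PendCyc G S x k p) [Fintype S] (A : Matrix V V ℂ)
    (hA0 : ∀ u v, ¬ G.Adj u v → A u v = 0) (hA1 : ∀ u v, G.Adj u v → A u v * A v u = 1)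
    (hW : (∏ t ∈ Finset.range (2 * k + 1), A (p t) (p (t + 1))) ^ 2 = -1)
    (hcard : Fintype.card V = Fintype.card S + 2 * k) :
    A.rank = (A.submatrix (Subtype.val : S → V) (Subtype.val : S → V)).rank + 2 * k := by
  have hk := h.hk
  set B := A.submatrix (Subtype.val : S → V) (Subtype.val : S → V) with hB
  have hab : ∀ t, t ≤ 2 * k → A (p t) (p (t + 1)) * A (p (t + 1)) (p t) = 1 :=
    fun t ht => hA1 _ _ (h.adj t ht)
  have hker : ∀ f : V → ℂ, f ∈ LinearMap.ker A.mulVecLin ↔ ∀ v, ∑ w, A v w * f w = 0 := by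
    intro f
    rw [LinearMap.mem_ker, Matrix.mulVecLin_apply, funext_iff]
    rfl
  have hkerB : ∀ f : S → ℂ, f ∈ LinearMap.ker B.mulVecLin ↔
      ∀ v : S, ∑ w : S, A v w * f w = 0 := by
    intro f
    rw [LinearMap.mem_ker, Matrix.mulVecLin_apply, funext_iff]
    rfl
  have hpath : ∀ f : V → ℂ, (∀ v, ∑ w, A v w * f w = 0) → ∀ s, s < 2 * k →
      A (p (s + 1)) (p s) * f (p s) + A (p (s + 1)) (p (s + 1 + 1)) * f (p (s + 2)) = 0 := by
    intro f hf s hs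
    rw [← hf (p (s + 1)), sum_path h A hA0 f s hs]
  have hcorr : ∀ f : V → ℂ, (∀ s, s < 2 * k →
      A (p (s + 1)) (p s) * f (p s) + A (p (s + 1)) (p (s + 1 + 1)) * f (p (s + 2)) = 0) →
      A x (p 1) * f (p 1) + A x (p (2 * k)) * f (p (2 * k)) = 0 := by
    intro f hf
    have := corr_zero (fun t => A (p t) (p (t + 1))) (fun t => A (p (t + 1)) (p t))
      (fun t => f (p t)) k hab hf (by simp only [h.pl, h.p0]) hW
    simpa only [h.p0, h.pl, zero_add] using this
  let R : LinearMap.ker A.mulVecLin →ₗ[ℂ] LinearMap.ker B.mulVecLin :=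
    LinearMap.restrict (LinearMap.funLeft ℂ ℂ (Subtype.val : S → V)) (by
      intro f hf
      rw [hker] at hf
      rw [hkerB]
      intro v
      simp only [LinearMap.funLeft_apply]
      by_cases hv : v.1 = x
      · have h1 := sum_x h A hA0 f
        rw [hcorr f (hpath f hf), add_zero, hf x] at h1
        rw [hv, ← h1]
      · rw [← sum_mem h A hA0 f v.1 v.2 hv]
        exact hf v)
  have hR : ∀ f v, (R f).1 v = f.1 v.1 := fun f v => rfl
  have hinj : Function.Injective R := by
    rw [injective_iff_map_eq_zero]
    intro f hf
    have hS : ∀ v (hv : v ∈ S), f.1 v = 0 := by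
      intro v hv
      rw [← hR f ⟨v, hv⟩, hf]
      rfl
    have hfk := (hker f.1).1 f.2
    have hz := F_zero (fun t => A (p t) (p (t + 1))) (fun t => A (p (t + 1)) (p t))
      (fun t => f.1 (p t)) k hab (hpath f.1 hfk) (by simp only [h.pl, h.p0])
      (by simp only [h.p0]; exact hS x h.x_mem)
    apply Subtype.ext
    funext v
    by_cases hv : v ∈ S
    · exact hS v hv
    · obtain ⟨t, h1, h2, rfl⟩ := h.ex v hv
      exact hz t h2
  have hsurj : Function.Surjective R := by
    intro g
    have hg := (hkerB g.1).1 g.2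
    obtain ⟨F, F0, F1, F2⟩ := exists_F (fun t => A (p t) (p (t + 1)))
      (fun t => A (p (t + 1)) (p t)) k (g.1 ⟨x, h.x_mem⟩) hab
    let f : V → ℂ := fun v => if hv : v ∈ S then g.1 ⟨v, hv⟩ else F (h.ex v hv).choose
    have fS : ∀ v (hv : v ∈ S), f v = g.1 ⟨v, hv⟩ := fun v hv => dif_pos hv
    have fp : ∀ t, t ≤ 2 * k + 1 → f (p t) = F t := by
      intro t ht
      by_cases hm : p t ∈ S
      · obtain ⟨e, h1⟩ := h.idx_of_mem t ht hm
        rw [fS _ hm]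
        have : (⟨p t, hm⟩ : S) = ⟨x, h.x_mem⟩ := Subtype.ext e
        rw [this]
        rcases h1 with h1 | h1
        · rw [h1, F0]
        · rw [h1, F1]
      · have : f (p t) = F (h.ex _ hm).choose := dif_neg hm
        rw [this]
        have hs := (h.ex _ hm).choose_spec
        congr 1
        have h2 := h.inj2 _ _ ht (by omega) hs.2.2
        rcases h2 with h2 | h2 | h2
        · exact h2.symm
        · omega
        · omega
    have hp : ∀ s, s < 2 * k →
      A (p (s + 1)) (p s) * f (p s) + A (p (s + 1)) (p (s + 1 + 1)) * f (p (s + 2)) = 0 := by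
      intro s hs
      rw [fp s (by omega), fp (s + 2) (by omega)]
      exact F2 s hs
    have hSum : ∀ v (hv : v ∈ S), ∑ w : S, A v w * f w = 0 := by
      intro v hv
      rw [← hg ⟨v, hv⟩]
      apply Finset.sum_congr rfl
      intro w _
      rw [fS w.1 w.2]
    have hf : ∀ v, ∑ w, A v w * f w = 0 := by
      intro v
      by_cases hv : v ∈ S
      · by_cases hx : v = x
        · subst hx
          rw [sum_x h A hA0 f, hcorr f hp, hSum _ hv, add_zero]
        · rw [sum_mem h A hA0 f v hv hx, hSum _ hv]
      · obtain ⟨t, h1, h2, rfl⟩ := h.ex v hv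
        obtain ⟨s, rfl⟩ : ∃ s, t = s + 1 := ⟨t - 1, by omega⟩
        rw [sum_path h A hA0 f s (by omega)]
        exact hp s (by omega)
    refine ⟨⟨f, (hker f).2 hf⟩, ?_⟩
    apply Subtype.ext
    funext v
    rw [hR]
    exact fS v.1 v.2
  have e : Module.finrank ℂ (LinearMap.ker A.mulVecLin) =
      Module.finrank ℂ (LinearMap.ker B.mulVecLin) := (LinearEquiv.ofBijective R ⟨hinj, hsurj⟩).finrank_eq
  have r1 := LinearMap.finrank_range_add_finrank_ker A.mulVecLin
  have r2 := LinearMap.finrank_range_add_finrank_ker B.mulVecLin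
  rw [Module.finrank_fintype_fun_eq_card] at r1 r2
  unfold Matrix.rank
  rw [hcard] at r1
  rw [e] at r1
  have r3 : Module.finrank ℂ (LinearMap.range B.mulVecLin) +
      Module.finrank ℂ (LinearMap.ker B.mulVecLin) = Fintype.card S := r2
  omega

end LA

/-- matchings as sets of edges -/
def IsEdgeMatching (G : SimpleGraph V) (E : Set (Sym2 V)) : Prop :=
  E ⊆ G.edgeSet ∧ ∀ e ∈ E, ∀ e' ∈ E, ∀ v, v ∈ e → v ∈ e' → e = e'

theorem isEdgeMatching_of {G : SimpleGraph V} (N : G.Subgraph) (hN : N.IsMatching) :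
    IsEdgeMatching G N.edgeSet := by
  refine ⟨N.edgeSet_subset, ?_⟩
  intro e he e' he' v hv hv'
  obtain ⟨a, rfl⟩ := Sym2.mem_iff_exists.1 hv
  obtain ⟨b, rfl⟩ := Sym2.mem_iff_exists.1 hv'
  rw [SimpleGraph.Subgraph.mem_edgeSet] at he he'
  rw [(hN he.fst_mem).unique he he']

theorem exists_subgraph {G : SimpleGraph V} (E : Set (Sym2 V)) (hE : IsEdgeMatching G E) :
    ∃ N : G.Subgraph, N.IsMatching ∧ N.edgeSet = E := by
  refine ⟨{ verts := {v | ∃ w, s(v, w) ∈ E}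
            Adj := fun v w => s(v, w) ∈ E
            adj_sub := fun h => hE.1 h
            edge_vert := fun {v w} h => ⟨w, h⟩
            symm := ⟨fun v w h => by rw [Sym2.eq_swap]; exact h⟩ }, ?_, ?_⟩
  · rintro v ⟨w, hw⟩
    refine ⟨w, hw, ?_⟩
    intro w' hw'
    have := hE.2 _ hw' _ hw v (Sym2.mem_mk_left _ _) (Sym2.mem_mk_left _ _)
    exact Sym2.congr_right.1 this
  · ext e
    induction e with
    | h a b => rfl

theorem bdd_matching [Finite V] (G : SimpleGraph V) :
    BddAbove {k | ∃ N : G.Subgraph, N.IsMatching ∧ N.edgeSet.ncard = k} := by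
  refine ⟨(Set.univ : Set (Sym2 V)).ncard, ?_⟩
  rintro k ⟨N, _, rfl⟩
  exact Set.ncard_le_ncard (Set.subset_univ _) (Set.toFinite _)

theorem ncard_le_matching [Finite V] (G : SimpleGraph V) (E : Set (Sym2 V))
    (hE : IsEdgeMatching G E) : E.ncard ≤ matchingNumber G := by
  obtain ⟨N, hN, rfl⟩ := exists_subgraph E hE
  exact le_csSup (bdd_matching G) ⟨N, hN, rfl⟩

theorem exists_matching [Finite V] (G : SimpleGraph V) :
    ∃ E, IsEdgeMatching G E ∧ E.ncard = matchingNumber G := by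
  have := Nat.sSup_mem (s := {k | ∃ N : G.Subgraph, N.IsMatching ∧ N.edgeSet.ncard = k})
    ⟨0, ⊥, fun v hv => absurd hv (by simp), by simp⟩ (bdd_matching G)
  obtain ⟨N, hN, h⟩ := this
  exact ⟨N.edgeSet, isEdgeMatching_of N hN, h⟩

section EdgeS
variable {G : SimpleGraph V} {S : Set V} {x : V} {k : ℕ} {p : ℕ → V}

theorem val_inj (S : Set V) : Function.Injective (Sym2.map (Subtype.val : S → V)) :=
  Sym2.map.injective Subtype.val_injective

theorem mem_image_iff (G : SimpleGraph V) (S : Set V) (e : Sym2 V) :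
    e ∈ Sym2.map (Subtype.val : S → V) '' (G.induce S).edgeSet ↔
      e ∈ G.edgeSet ∧ ∀ v ∈ e, v ∈ S := by
  constructor
  · rintro ⟨e', he', rfl⟩
    induction e' with
    | h a b =>
      refine ⟨he', ?_⟩
      intro v hv
      rw [Sym2.map_mk, Sym2.mem_iff] at hv
      rcases hv with rfl | rfl
      · exact a.2
      · exact b.2
  · rintro ⟨h1, h2⟩
    induction e with
    | h a b =>
      exact ⟨s(⟨a, h2 a (Sym2.mem_mk_left _ _)⟩, ⟨b, h2 b (Sym2.mem_mk_right _ _)⟩), h1, rfl⟩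

theorem edge_class (h : PendCyc G S x k p) (e : Sym2 V) (he : e ∈ G.edgeSet)
    (hn : ¬ ∀ v ∈ e, v ∈ S) : ∃ t, t ≤ 2 * k ∧ e = s(p t, p (t + 1)) := by
  push Not at hn
  obtain ⟨v, hv, hvS⟩ := hn
  obtain ⟨w, rfl⟩ := Sym2.mem_iff_exists.1 hv
  obtain ⟨t, h1, h2, rfl⟩ := h.ex v hvS
  rcases h.nb t h1 h2 w he with e | e
  · refine ⟨t - 1, by omega, ?_⟩
    rw [e, show t - 1 + 1 = t by omega, Sym2.eq_swap]
  · exact ⟨t, h2, by rw [e]⟩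

theorem edge_not (h : PendCyc G S x k p) (t : ℕ) (ht : t ≤ 2 * k) :
    ¬ ∀ v ∈ s(p t, p (t + 1)), v ∈ S := by
  have hk := h.hk
  intro hh
  rcases Nat.eq_zero_or_pos t with h0 | h0
  · subst h0
    exact h.not_mem 1 le_rfl (by omega) (hh _ (Sym2.mem_mk_right _ _))
  · exact h.not_mem t h0 ht (hh _ (Sym2.mem_mk_left _ _))

theorem edge_inj (h : PendCyc G S x k p) (t t' : ℕ) (ht : t ≤ 2 * k) (ht' : t' ≤ 2 * k)
    (e : s(p t, p (t + 1)) = s(p t', p (t' + 1))) : t = t' := by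
  have hk := h.hk
  rw [Sym2.eq_iff] at e
  rcases e with ⟨e1, e2⟩ | ⟨e1, e2⟩
  · exact h.inj _ _ ht ht' e1
  · have h1 := h.inj2 _ _ (by omega) (by omega) e1
    have h2 := h.inj2 _ _ (by omega) (by omega) e2
    omega

theorem card_red [Fintype V] [Fintype S] (h : PendCyc G S x k p) :
    Fintype.card V = Fintype.card S + 2 * k := by
  have h1 := Set.ncard_add_ncard_compl S
  have h2 : Sᶜ = p '' (Finset.Icc 1 (2 * k) : Finset ℕ) := by
    ext v
    simp only [Set.mem_compl_iff, Set.mem_image, Finset.mem_coe, Finset.mem_Icc]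
    constructor
    · intro hv
      obtain ⟨t, h1, h2, rfl⟩ := h.ex v hv
      exact ⟨t, ⟨h1, h2⟩, rfl⟩
    · rintro ⟨t, ⟨h1, h2⟩, rfl⟩
      exact h.not_mem t h1 h2
  rw [h2, Set.InjOn.ncard_image, Set.ncard_coe_finset, Nat.card_Icc,
    ← Nat.card_coe_set_eq, Nat.card_eq_fintype_card, Nat.card_eq_fintype_card] at h1
  · omega
  · intro i hi j hj e
    simp only [Finset.mem_coe, Finset.mem_Icc] at hi hj
    exact h.inj i j hi.2 hj.2 e

theorem edges_red [Finite V] (h : PendCyc G S x k p) :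
    G.edgeSet.ncard = (G.induce S).edgeSet.ncard + (2 * k + 1) := by
  have h1 : G.edgeSet = (Sym2.map (Subtype.val : S → V) '' (G.induce S).edgeSet) ∪
      (fun t => s(p t, p (t + 1))) '' (Finset.range (2 * k + 1) : Finset ℕ) := by
    ext e
    rw [Set.mem_union, mem_image_iff]
    constructor
    · intro he
      by_cases hn : ∀ v ∈ e, v ∈ S
      · exact Or.inl ⟨he, hn⟩
      · obtain ⟨t, ht, rfl⟩ := edge_class h e he hn
        exact Or.inr ⟨t, by simpa using Nat.lt_succ_of_le ht, rfl⟩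
    · rintro (he | ⟨t, ht, rfl⟩)
      · exact he.1
      · simp only [Finset.mem_coe, Finset.mem_range] at ht
        exact h.adj t (by omega)
  rw [h1, Set.ncard_union_eq _ (Set.toFinite _) (Set.toFinite _),
    Set.ncard_image_of_injective _ (val_inj S), Set.InjOn.ncard_image, Set.ncard_coe_finset,
    Finset.card_range]
  · intro i hi j hj e
    simp only [Finset.mem_coe, Finset.mem_range] at hi hj
    exact edge_inj h i j (by omega) (by omega) e
  · rw [Set.disjoint_left]
    rintro e he ⟨t, ht, rfl⟩
    rw [mem_image_iff] at he
    simp only [Finset.mem_coe, Finset.mem_range] at ht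
    exact edge_not h t (by omega) he.2

theorem conn_red (h : PendCyc G S x k p) (hc : G.Connected) : (G.induce S).Connected := by
  let r : V → S := fun v => if hv : v ∈ S then ⟨v, hv⟩ else ⟨x, h.x_mem⟩
  have rS : ∀ v (hv : v ∈ S), r v = ⟨v, hv⟩ := fun v hv => dif_pos hv
  have rN : ∀ v (hv : v ∉ S), r v = ⟨x, h.x_mem⟩ := fun v hv => dif_neg hv
  have key : ∀ u v, u ∉ S → G.Adj u v → r v = ⟨x, h.x_mem⟩ := by
    intro u v hu ha
    by_cases hv : v ∈ S
    · obtain ⟨t, h1, h2, rfl⟩ := h.ex u hu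
      rw [rS v hv]
      exact Subtype.ext (h.adj_mem t h1 h2 v hv ha).1
    · exact rN v hv
  have step : ∀ u v, G.Adj u v → (G.induce S).Reachable (r u) (r v) := by
    intro u v ha
    by_cases hu : u ∈ S
    · by_cases hv : v ∈ S
      · rw [rS u hu, rS v hv]
        exact SimpleGraph.Adj.reachable (G := G.induce S) ha
      · rw [key v u hv ha.symm, rN v hv]
    · rw [key u v hu ha, rN u hu]
  have main : ∀ u v, G.Walk u v → (G.induce S).Reachable (r u) (r v) := by
    intro u v w
    induction w with
    | nil => exact SimpleGraph.Reachable.refl _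
    | cons ha _ ih => exact (step _ _ ha).trans ih
  have : Nonempty S := ⟨⟨x, h.x_mem⟩⟩
  refine SimpleGraph.Connected.mk ?_
  intro u v
  obtain ⟨w⟩ := hc.preconnected u.1 v.1
  have := main _ _ w
  rwa [rS u.1 u.2, rS v.1 v.2] at this

theorem matching_le [Finite V] (h : PendCyc G S x k p) :
    matchingNumber G ≤ matchingNumber (G.induce S) + k := by
  have hk := h.hk
  obtain ⟨E, hE, hc⟩ := exists_matching G
  rw [← hc]
  let E2 : Set (Sym2 S) := Sym2.map (Subtype.val : S → V) ⁻¹' E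
  let T : Finset ℕ := (Finset.range (2 * k + 1)).filter (fun t => s(p t, p (t + 1)) ∈ E)
  have hT : ∀ t ∈ T, t ≤ 2 * k ∧ s(p t, p (t + 1)) ∈ E := by
    intro t ht
    simp only [T, Finset.mem_filter, Finset.mem_range] at ht
    exact ⟨by omega, ht.2⟩
  have hsub : E ⊆ (Sym2.map (Subtype.val : S → V) '' E2) ∪
      (fun t => s(p t, p (t + 1))) '' (T : Set ℕ) := by
    intro e he
    by_cases hn : ∀ v ∈ e, v ∈ S
    · left
      obtain ⟨e', _, rfl⟩ := (mem_image_iff G S e).2 ⟨hE.1 he, hn⟩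
      exact ⟨e', he, rfl⟩
    · right
      obtain ⟨t, ht, rfl⟩ := edge_class h e (hE.1 he) hn
      refine ⟨t, ?_, rfl⟩
      simp only [T, Finset.coe_filter, Finset.mem_range]
      exact ⟨by omega, he⟩
  have hM2 : IsEdgeMatching (G.induce S) E2 := by
    constructor
    · intro e he
      have := hE.1 he
      induction e with
      | h a b => exact this
    · intro e he e' he' v hv hv'
      exact val_inj S (hE.2 _ he _ he' v.1 (Sym2.mem_map.2 ⟨v, hv, rfl⟩)
        (Sym2.mem_map.2 ⟨v, hv', rfl⟩))
  have h2 := ncard_le_matching _ _ hM2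
  have hcons : ∀ t, t ∈ T → t + 1 ∉ T := by
    intro t ht ht'
    obtain ⟨a1, a2⟩ := hT t ht
    obtain ⟨b1, b2⟩ := hT _ ht'
    have := hE.2 _ a2 _ b2 (p (t + 1)) (Sym2.mem_mk_right _ _) (Sym2.mem_mk_left _ _)
    have := edge_inj h _ _ a1 b1 this
    omega
  have hends : 0 ∈ T → 2 * k ∉ T := by
    intro ht ht'
    obtain ⟨a1, a2⟩ := hT _ ht
    obtain ⟨b1, b2⟩ := hT _ ht'
    have hx : x ∈ s(p (2 * k), p (2 * k + 1)) := by rw [h.pl]; exact Sym2.mem_mk_right _ _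
    have hx' : x ∈ s(p 0, p (0 + 1)) := by rw [h.p0]; exact Sym2.mem_mk_left _ _
    have := hE.2 _ a2 _ b2 x hx' hx
    have := edge_inj h _ _ a1 b1 this
    omega
  have h1 : T.card ≤ k := by
    rw [← Finset.card_range k]
    by_cases h0 : 2 * k ∈ T
    · have h00 : 0 ∉ T := fun hh => hends hh h0
      apply Finset.card_le_card_of_injOn (fun t => (t - 1) / 2)
      · intro t ht
        have := (hT t ht).1
        have h3 : t ≠ 0 := by rintro rfl; exact h00 ht
        simp only [Finset.coe_range, Set.mem_Iio]
        omega
      · intro i hi j hj e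
        simp only at e
        have h3 : i ≠ 0 := by rintro rfl; exact h00 hi
        have h4 : j ≠ 0 := by rintro rfl; exact h00 hj
        have h5 : j ≠ i + 1 := by rintro rfl; exact hcons i hi hj
        have h6 : i ≠ j + 1 := by rintro rfl; exact hcons j hj hi
        omega
    · apply Finset.card_le_card_of_injOn (fun t => t / 2)
      · intro t ht
        have := (hT t ht).1
        have h3 : t ≠ 2 * k := by rintro rfl; exact h0 ht
        simp only [Finset.coe_range, Set.mem_Iio]
        omega
      · intro i hi j hj e
        simp only at e
        have h5 : j ≠ i + 1 := by rintro rfl; exact hcons i hi hj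
        have h6 : i ≠ j + 1 := by rintro rfl; exact hcons j hj hi
        omega
  calc E.ncard ≤ _ := Set.ncard_le_ncard hsub (Set.toFinite _)
    _ ≤ _ := Set.ncard_union_le _ _
    _ ≤ E2.ncard + (T : Set ℕ).ncard :=
      add_le_add (Set.ncard_image_le (Set.toFinite _)) (Set.ncard_image_le (Set.toFinite _))
    _ ≤ _ := by rw [Set.ncard_coe_finset]; exact add_le_add h2 h1

theorem matching_ge [Finite V] (h : PendCyc G S x k p) :
    matchingNumber (G.induce S) + k ≤ matchingNumber G := by
  have hk := h.hk
  obtain ⟨E, hE, hc⟩ := exists_matching (G.induce S)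
  rw [← hc]
  let P : Set (Sym2 V) :=
    (fun j => s(p (2 * j + 1), p (2 * j + 1 + 1))) '' (Finset.range k : Finset ℕ)
  let Q : Set (Sym2 V) := Sym2.map (Subtype.val : S → V) '' E
  have hQ : ∀ e ∈ Q, e ∈ G.edgeSet ∧ ∀ v ∈ e, v ∈ S := by
    intro e he
    exact (mem_image_iff G S e).1 (Set.image_mono hE.1 he)
  have hP : ∀ e ∈ P, e ∈ G.edgeSet ∧ ∀ v ∈ e, v ∉ S := by
    rintro e ⟨j, hj, rfl⟩
    simp only [Finset.mem_coe, Finset.mem_range] at hj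
    refine ⟨h.adj _ (by omega), ?_⟩
    intro v hv
    rw [Sym2.mem_iff] at hv
    rcases hv with rfl | rfl
    · exact h.not_mem _ (by omega) (by omega)
    · exact h.not_mem _ (by omega) (by omega)
  have hdis : Disjoint Q P := by
    rw [Set.disjoint_left]
    intro e h1 h2
    induction e with
    | h a b =>
      exact (hP _ h2).2 a (Sym2.mem_mk_left _ _) ((hQ _ h1).2 a (Sym2.mem_mk_left _ _))
  have hM : IsEdgeMatching G (Q ∪ P) := by
    constructor
    · rintro e (he | he)
      · exact (hQ e he).1
      · exact (hP e he).1
    · rintro e (he | he) e' (he' | he') v hv hv'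
      · obtain ⟨a, ha, rfl⟩ := he
        obtain ⟨b, hb, rfl⟩ := he'
        obtain ⟨v1, hv1, rfl⟩ := Sym2.mem_map.1 hv
        obtain ⟨v2, hv2, e2⟩ := Sym2.mem_map.1 hv'
        have := Subtype.val_injective e2
        subst this
        rw [hE.2 _ ha _ hb v2 hv1 hv2]
      · exact absurd ((hQ e he).2 v hv) ((hP e' he').2 v hv')
      · exact absurd ((hQ e' he').2 v hv') ((hP e he).2 v hv)
      · obtain ⟨i, hi, rfl⟩ := he
        obtain ⟨j, hj, rfl⟩ := he'
        simp only [Finset.mem_coe, Finset.mem_range] at hi hj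
        simp only [Sym2.mem_iff] at hv hv'
        have : i = j := by
          rcases hv with rfl | rfl <;> rcases hv' with e | e
          all_goals
            have := h.inj _ _ (by omega) (by omega) e
            omega
        rw [this]
  have := ncard_le_matching _ _ hM
  rw [Set.ncard_union_eq hdis (Set.toFinite _) (Set.toFinite _),
    Set.ncard_image_of_injective _ (val_inj S), Set.InjOn.ncard_image, Set.ncard_coe_finset,
    Finset.card_range] at this
  · exact this
  · intro i hi j hj e
    simp only [Finset.mem_coe, Finset.mem_range] at hi hj
    have := edge_inj h _ _ (by omega) (by omega) e
    omega

end EdgeS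

section Final

theorem prod_darts {G : SimpleGraph V} (φ : V → V → ℂ) {u v : V} (w : G.Walk u v) :
    ∏ t ∈ Finset.range w.length, φ (w.getVert t) (w.getVert (t + 1)) =
      (w.darts.map (fun d => φ d.toProd.1 d.toProd.2)).prod := by
  induction w with
  | nil => simp
  | cons ha w ih =>
    rw [SimpleGraph.Walk.length_cons, Finset.prod_range_succ', SimpleGraph.Walk.darts_cons,
      List.map_cons, List.prod_cons, ← ih, mul_comm]
    simp

variable [Fintype V] [DecidableEq V] (M : MixedGraph V)

theorem hM_zero (u v : V) (h : ¬ M.graph.Adj u v) : M.hMatrix u v = 0 := by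
  have h1 : ¬ M.arc u v := fun hh => h (M.arc_adj _ _ hh)
  have h2 : ¬ M.arc v u := fun hh => h (M.arc_adj _ _ hh).symm
  simp [MixedGraph.hMatrix, h, h1, h2]

theorem hM_one (u v : V) (h : M.graph.Adj u v) : M.hMatrix u v * M.hMatrix v u = 1 := by
  have h0 := h.symm
  by_cases h1 : M.arc u v
  · have h2 := M.arc_antisymm _ _ h1
    simp [MixedGraph.hMatrix, h1, h2]
  · by_cases h2 : M.arc v u
    · simp [MixedGraph.hMatrix, h1, h2]
    · simp [MixedGraph.hMatrix, h, h0, h1, h2]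

theorem hM_sq (l : List M.graph.Dart) :
    ((l.map (fun d => M.hMatrix d.toProd.1 d.toProd.2)).prod) ^ 2 =
      (-1) ^ (l.countP (fun d => M.arc d.toProd.1 d.toProd.2) +
        l.countP (fun d => M.arc d.toProd.2 d.toProd.1)) := by
  induction l with
  | nil => simp
  | cons d l ih =>
    have h := d.adj
    rw [List.map_cons, List.prod_cons, mul_pow, ih, List.countP_cons, List.countP_cons]
    by_cases h1 : M.arc d.toProd.1 d.toProd.2
    · have h2 := M.arc_antisymm _ _ h1
      simp only [MixedGraph.hMatrix, h1, h2, if_true]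
      simp only [Complex.I_sq, Bool.false_eq_true, if_false]
      ring
    · by_cases h2 : M.arc d.toProd.2 d.toProd.1
      · simp only [MixedGraph.hMatrix, h1, h2, if_true]
        simp only [neg_sq, Complex.I_sq, Bool.false_eq_true, if_false]
        ring
      · simp [MixedGraph.hMatrix, h1, h2, h]

theorem final_param (C : M.graph.Subgraph) (x : V) (hpc : IsPendantCycle M.graph C x)
    (hodd : Odd C.verts.ncard) (hsig : CycleSig M C Odd) :
    ∃ k p, PendCyc M.graph (C.vertsᶜ ∪ {x}) x k p ∧
      (∏ t ∈ Finset.range (2 * k + 1), M.hMatrix (p t) (p (t + 1))) ^ 2 = -1 := by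
  obtain ⟨u, w0, hw0, hsupp0, -, hs0⟩ := hsig
  obtain ⟨-, hx, -, hdeg⟩ := hpc
  have hxs : x ∈ w0.support := by
    rw [← hsupp0] at hx; exact hx
  let w := w0.rotate x hxs
  have hw : w.IsCycle := (SimpleGraph.Walk.isCycle_rotate hxs).2 hw0
  have hsupp : ∀ v, v ∈ w.support ↔ v ∈ C.verts := by
    intro v
    rw [← hsupp0, SimpleGraph.Walk.mem_support_rotate_iff]
    rfl
  have hperm : w.darts.Perm w0.darts := (w0.rotate_darts x hxs).perm
  have hlen := hw.three_le_length
  have hinj : ∀ i j, i < w.length → j < w.length → w.getVert i = w.getVert j → i = j := by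
    intro i j hi hj e
    exact hw.getVert_injOn' (by simp only [Set.mem_ofPred_eq]; omega)
      (by simp only [Set.mem_ofPred_eq]; omega) e
  have hcard : C.verts.ncard = w.length := by
    have : C.verts = w.getVert '' (Finset.range w.length : Finset ℕ) := by
      ext v
      rw [← hsupp, SimpleGraph.Walk.mem_support_iff_exists_getVert]
      simp only [Set.mem_image, Finset.mem_coe, Finset.mem_range]
      constructor
      · rintro ⟨n, e, hn⟩
        rcases Nat.lt_or_ge n w.length with h1 | h1
        · exact ⟨n, h1, e⟩
        · refine ⟨0, by omega, ?_⟩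
          have : n = w.length := by omega
          rw [← e, this]; simp
      · rintro ⟨n, hn, e⟩
        exact ⟨n, e, by omega⟩
    rw [this, Set.InjOn.ncard_image, Set.ncard_coe_finset, Finset.card_range]
    intro i hi j hj e
    simp only [Finset.mem_coe, Finset.mem_range] at hi hj
    exact hinj i j hi hj e
  rw [hcard] at hodd
  obtain ⟨k, hk⟩ := hodd
  refine ⟨k, w.getVert, ?_, ?_⟩
  · have hneq : ∀ t, 1 ≤ t → t ≤ 2 * k → w.getVert t ≠ x := by
      intro t h1 h2 e
      have : w.getVert t = w.getVert 0 := by rw [e]; simp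
      have := hinj t 0 (by omega) (by omega) this
      omega
    refine ⟨by omega, by simp, by rw [← hk]; simp, ?_, ?_, ?_, ?_⟩
    · intro i j hi hj e
      exact hinj i j (by omega) (by omega) e
    · intro t ht
      exact w.adj_getVert_succ (by omega)
    · intro t h1 h2 v hv
      have hd := hdeg (w.getVert t) ((hsupp _).1 (w.getVert_mem_support t)) (hneq t h1 h2)
      have hne : w.getVert (t - 1) ≠ w.getVert (t + 1) := by
        intro e
        rcases Nat.lt_or_ge (t + 1) w.length with h3 | h3
        · have := hinj _ _ (by omega) h3 e
          omega
        · have h4 : t + 1 = w.length := by omega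
          rw [h4, SimpleGraph.Walk.getVert_length] at e
          rcases Nat.lt_or_ge 1 t with h5 | h5
          · exact hneq (t - 1) (by omega) (by omega) e
          · omega
      have ha1 : M.graph.Adj (w.getVert t) (w.getVert (t - 1)) := by
        have := w.adj_getVert_succ (i := t - 1) (by omega)
        rw [show t - 1 + 1 = t by omega] at this
        exact this.symm
      have ha2 : M.graph.Adj (w.getVert t) (w.getVert (t + 1)) :=
        w.adj_getVert_succ (by omega)
      have hsub : ({w.getVert (t - 1), w.getVert (t + 1)} : Set V) ⊆
          {v | M.graph.Adj (w.getVert t) v} := by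
        rintro y (rfl | rfl)
        · exact ha1
        · exact ha2
      have heq := Set.eq_of_subset_of_ncard_le hsub
        (by rw [hd, Set.ncard_pair hne]) (Set.toFinite _)
      have hv' : v ∈ ({w.getVert (t - 1), w.getVert (t + 1)} : Set V) := by
        rw [heq]; exact hv
      exact hv'
    · intro v
      constructor
      · intro hv t h1 h2 e
        rcases hv with hv | hv
        · apply hv
          rw [e]
          exact (hsupp _).1 (w.getVert_mem_support t)
        · exact hneq t h1 h2 (e.symm.trans hv)
      · intro hv
        by_cases hC : v ∈ C.verts
        · right
          obtain ⟨n, e, hn⟩ := SimpleGraph.Walk.mem_support_iff_exists_getVert.1 ((hsupp v).2 hC)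
          rcases Nat.eq_zero_or_pos n with h0 | h0
          · subst h0
            rw [← e]; simp
          · rcases Nat.lt_or_ge (2 * k) n with h1 | h1
            · have : n = w.length := by omega
              rw [← e, this]; simp
            · exact absurd e.symm (hv n h0 h1)
        · exact Or.inl hC
  · have hpd := prod_darts M.hMatrix w
    rw [← hk, hpd, hM_sq, hperm.countP_eq, hperm.countP_eq]
    unfold walkSignature at hs0
    apply Odd.neg_one_pow
    rw [Int.natAbs_odd] at hs0
    generalize List.countP _ w0.darts = a at *
    generalize List.countP _ w0.darts = b at *
    rw [Int.odd_iff] at hs0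
    rw [Nat.odd_iff]
    omega

end Final

/-- Let G̃ be connected with pairwise vertex-disjoint cycles,
κ(G) = c(G) − 1, c(G) ≥ 2, no pendant vertices, and a pendant odd cycle C̃_q of odd
signature with unique degree-3 vertex x; let H̃ = G̃ − V(C_q) + x. Then
r(G̃) = 2m(G) − 2κ(G) iff r(H̃) = 2m(H) − 2c(H). -/
theorem pendant_odd_cycle_reduction_iff
    {V : Type u} [Fintype V] [DecidableEq V] (M : MixedGraph V)
    (hconn : M.graph.Connected) (hdisj : CyclesVertexDisjoint M.graph)
    (hκ : (evenCycleCount M.graph : ℤ) = cyclomatic M.graph - 1)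
    (hc : 2 ≤ cyclomatic M.graph) (hnp : NoPendantVerts M.graph)
    (C : M.graph.Subgraph) (x : V) (hpc : IsPendantCycle M.graph C x)
    (hodd : Odd C.verts.ncard) (hsig : CycleSig M C Odd) :
    (M.hRank : ℤ) =
        2 * (matchingNumber M.graph : ℤ) - 2 * (evenCycleCount M.graph : ℤ) ↔
      ((M.induce (C.vertsᶜ ∪ {x})).hRank : ℤ) =
        2 * (matchingNumber (M.induce (C.vertsᶜ ∪ {x})).graph : ℤ) -
          2 * cyclomatic (M.induce (C.vertsᶜ ∪ {x})).graph := by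
  obtain ⟨k, p, hp, hW⟩ := final_param M C x hpc hodd hsig
  have h1 : M.hRank = (M.induce (C.vertsᶜ ∪ {x})).hRank + 2 * k :=
    rank_red hp M.hMatrix (hM_zero M) (hM_one M) hW (card_red hp)
  have h2 : matchingNumber M.graph =
      matchingNumber (M.induce (C.vertsᶜ ∪ {x})).graph + k :=
    le_antisymm (matching_le hp) (matching_ge hp)
  have h3 := edges_red hp
  have h4 := card_red hp
  have hH : (M.induce (C.vertsᶜ ∪ {x})).graph.Connected := conn_red hp hconn
  have hcc : ∀ {W : Type u} (G : SimpleGraph W), G.Connected →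
      Nat.card G.ConnectedComponent = 1 := by
    intro W G hG
    rw [Nat.card_eq_one_iff_unique]
    have := hG.preconnected.subsingleton_connectedComponent
    obtain ⟨v⟩ := hG.nonempty
    exact ⟨this, ⟨G.connectedComponentMk v⟩⟩
  have h5 : cyclomatic M.graph = cyclomatic (M.induce (C.vertsᶜ ∪ {x})).graph + 1 := by
    unfold cyclomatic
    rw [hcc _ hconn, hcc _ hH, h3, h4]
    push_cast
    have : (M.induce (C.vertsᶜ ∪ {x})).graph = M.graph.induce (C.vertsᶜ ∪ {x}) := rfl
    rw [this]
    ring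
  rw [hκ, h5, h1, h2]
  push_cast
  constructor <;> intro h <;> linarith

end MixedPaper
end

section
/- Let G~ be a mixed graph whose cycles are pairwise vertex-disjoint and which has no pendant vertices. Suppose G~ has a pendant even cycle C~_q with σ(C~_q) ≡ q (mod 4) and r(G~) = 2m(G) − 2κ(G) + 1. Let x be the unique vertex of degree 3 on C_q and let H~ = G~ − V(C_q) + x. Then r(H~) = 2m(H) − 2κ(H) + 1. -/
open scoped Classical

namespace MixedPaper

universe u

variable {V : Type u}

section CycleTransport

variable {W : Type*} {G : SimpleGraph V} {G' : SimpleGraph W}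

lemma subgraph_connected_iff_rtg (C : G.Subgraph) :
    C.Connected ↔ ∃ u ∈ C.verts, ∀ v ∈ C.verts, Relation.ReflTransGen C.Adj u v := by
  rw [SimpleGraph.Subgraph.connected_iff']
  constructor
  · intro h
    obtain ⟨⟨u, hu⟩⟩ := h.nonempty
    refine ⟨u, hu, fun v hv => ?_⟩
    have := h.preconnected ⟨u, hu⟩ ⟨v, hv⟩
    rw [SimpleGraph.reachable_iff_reflTransGen] at this
    exact Relation.ReflTransGen.lift (Subtype.val) (fun a b hab => hab) _ _ this
  · rintro ⟨u, hu, h⟩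
    have key : ∀ v, Relation.ReflTransGen C.Adj u v → ∃ hv : v ∈ C.verts,
        C.coe.Reachable ⟨u, hu⟩ ⟨v, hv⟩ := by
      intro v hv
      induction hv with
      | refl => exact ⟨hu, SimpleGraph.Reachable.refl _⟩
      | tail h1 h2 ih =>
        obtain ⟨hb, hr⟩ := ih
        refine ⟨C.edge_vert h2.symm, hr.trans (SimpleGraph.Adj.reachable ?_)⟩
        exact h2
    have : Nonempty C.verts := ⟨⟨u, hu⟩⟩
    refine ⟨fun a b => ?_⟩
    obtain ⟨_, ha⟩ := key a (h a a.2)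
    obtain ⟨_, hb⟩ := key b (h b b.2)
    exact ha.symm.trans hb

lemma map_adj_iff (f : G ↪g G') (C : G.Subgraph) (a b : V) :
    (C.map f.toHom).Adj (f a) (f b) ↔ C.Adj a b := by
  constructor
  · rintro ⟨a', b', h, h1, h2⟩
    have := f.injective h1
    have := f.injective h2
    subst_vars; exact h
  · intro h; exact ⟨a, b, h, rfl, rfl⟩

lemma isCycleSubgraph_map_iff (f : G ↪g G') (C : G.Subgraph) :
    IsCycleSubgraph (C.map f.toHom) ↔ IsCycleSubgraph C := by
  unfold IsCycleSubgraph
  have hdeg : ∀ v, {w | (C.map f.toHom).Adj (f v) w}.ncard = {w | C.Adj v w}.ncard := by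
    intro v
    rw [← Set.ncard_image_of_injective _ f.injective]
    congr 1
    ext w
    constructor
    · intro h
      obtain ⟨a', b', h', h1, h2⟩ := h
      refine ⟨b', ?_, h2⟩
      have := f.injective h1
      subst this; exact h'
    · rintro ⟨b, hb, rfl⟩
      exact (map_adj_iff f C v b).2 hb
  rw [subgraph_connected_iff_rtg, subgraph_connected_iff_rtg]
  constructor
  · rintro ⟨⟨u, hu, h⟩, h2⟩
    obtain ⟨u, hu, rfl⟩ := hu
    refine ⟨⟨u, hu, fun v hv => ?_⟩, fun v hv => ?_⟩
    · have key : ∀ z, Relation.ReflTransGen (C.map f.toHom).Adj (f u) z →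
          ∃ z', f z' = z ∧ Relation.ReflTransGen C.Adj u z' := by
        intro z hz
        induction hz with
        | refl => exact ⟨u, rfl, .refl⟩
        | tail h1 h2 ih =>
          obtain ⟨b, rfl, hb⟩ := ih
          obtain ⟨a', b', h', h1, rfl⟩ := h2
          have := f.injective h1
          subst this
          exact ⟨b', rfl, hb.tail h'⟩
      obtain ⟨z', h1, h2⟩ := key (f v) (h (f v) ⟨v, hv, rfl⟩)
      have := f.injective h1
      subst this; exact h2
    · rw [← hdeg]; exact h2 _ ⟨v, hv, rfl⟩
  · rintro ⟨⟨u, hu, h⟩, h2⟩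
    refine ⟨⟨f u, ⟨u, hu, rfl⟩, ?_⟩, ?_⟩
    · rintro _ ⟨v, hv, rfl⟩
      exact Relation.ReflTransGen.lift f (fun a b hab => (map_adj_iff f C a b).2 hab) _ _ (h v hv)
    · rintro _ ⟨v, hv, rfl⟩
      exact (hdeg v).trans (h2 v hv)

lemma ncard_verts_map (f : G ↪g G') (C : G.Subgraph) :
    (C.map f.toHom).verts.ncard = C.verts.ncard :=
  Set.ncard_image_of_injective _ f.injective

lemma subgraph_map_injective (f : G ↪g G') :
    Function.Injective (fun C : G.Subgraph => C.map f.toHom) := by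
  intro C D h
  have h' : C.map f.toHom = D.map f.toHom := h
  ext a b
  · have : f a ∈ (C.map f.toHom).verts ↔ f a ∈ (D.map f.toHom).verts := by rw [h']
    have h1 : ∀ E : G.Subgraph, f a ∈ (E.map f.toHom).verts ↔ a ∈ E.verts := by
      intro E
      constructor
      · rintro ⟨b, hb, hab⟩
        have := f.injective hab
        subst this; exact hb
      · intro h; exact ⟨a, h, rfl⟩
    rw [h1, h1] at this
    exact this
  · rw [← map_adj_iff f C, ← map_adj_iff f D, h']

lemma exists_map_eq_of_verts_subset (S : Set V) (D : G.Subgraph) (h : D.verts ⊆ S) :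
    ∃ D' : (G.induce S).Subgraph,
      D'.map (SimpleGraph.Embedding.induce (G := G) S).toHom = D := by
  refine ⟨D.comap (SimpleGraph.Embedding.induce (G := G) S).toHom, ?_⟩
  ext a b
  · constructor
    · rintro ⟨v, hv, rfl⟩; exact hv
    · intro ha; exact ⟨⟨a, h ha⟩, ha, rfl⟩
  · constructor
    · rintro ⟨a', b', h', rfl, rfl⟩
      exact h'.2
    · intro hab
      exact ⟨⟨a, h (D.edge_vert hab)⟩, ⟨b, h (D.edge_vert hab.symm)⟩,
        ⟨D.adj_sub hab, hab⟩, rfl, rfl⟩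

/-- κ(G) = κ(H) + 1. -/
lemma evenCycleCount_eq [Fintype V] (hdisj : CyclesVertexDisjoint G) (C : G.Subgraph)
    (hC : IsCycleSubgraph C) (heven : Even C.verts.ncard) (S : Set V)
    (hS : C.vertsᶜ ⊆ S) (hCS : ¬ C.verts ⊆ S) :
    evenCycleCount G = evenCycleCount (G.induce S) + 1 := by
  unfold evenCycleCount
  set f := SimpleGraph.Embedding.induce (G := G) S
  rw [← Set.ncard_image_of_injective _ (subgraph_map_injective f)]
  rw [← Set.ncard_insert_of_notMem (a := C)]
  · congr 1
    ext D
    constructor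
    · rintro ⟨h1, h2⟩
      by_cases hDC : D = C
      · exact Or.inl hDC
      · right
        have hd := hdisj D C h1 hC hDC
        obtain ⟨D', hD'⟩ := exists_map_eq_of_verts_subset S D
          (fun v hv => hS (Set.disjoint_left.1 hd hv))
        refine ⟨D', ⟨?_, ?_⟩, hD'⟩
        · rw [← isCycleSubgraph_map_iff f, hD']; exact h1
        · rw [← ncard_verts_map f, hD']; exact h2
    · rintro (rfl | ⟨D', ⟨h1, h2⟩, rfl⟩)
      · exact ⟨hC, heven⟩
      · refine ⟨(isCycleSubgraph_map_iff f _).2 h1, ?_⟩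
        simpa only [ncard_verts_map f] using h2
  · rintro ⟨D', _, rfl⟩
    apply hCS
    rintro _ ⟨v, _, rfl⟩
    exact v.2

end CycleTransport

section Matchings

variable [Fintype V] {G : SimpleGraph V}

/-- A set of pairwise disjoint edges. -/
def EdgeMatching (G : SimpleGraph V) (F : Set (Sym2 V)) : Prop :=
  F ⊆ G.edgeSet ∧ ∀ e ∈ F, ∀ f ∈ F, ∀ v, v ∈ e → v ∈ f → e = f

lemma edgeMatching_of_isMatching (N : G.Subgraph) (hN : N.IsMatching) :
    EdgeMatching G N.edgeSet := by
  refine ⟨N.edgeSet_subset, ?_⟩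
  intro e he f hf v hve hvf
  obtain ⟨a, rfl⟩ := hve
  obtain ⟨b, rfl⟩ := hvf
  rw [SimpleGraph.Subgraph.mem_edgeSet] at he hf
  rw [(hN (N.edge_vert he)).unique he hf]

lemma matching_bdd (G : SimpleGraph V) :
    BddAbove {k | ∃ N : G.Subgraph, N.IsMatching ∧ N.edgeSet.ncard = k} := by
  refine ⟨(Set.univ : Set (Sym2 V)).ncard, ?_⟩
  rintro k ⟨N, _, rfl⟩
  exact Set.ncard_le_ncard (Set.subset_univ _) (Set.toFinite _)

lemma EdgeMatching.ncard_le {F : Set (Sym2 V)} (hF : EdgeMatching G F) :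
    F.ncard ≤ matchingNumber G := by
  apply le_csSup (matching_bdd G)
  refine ⟨{ verts := {v | ∃ e ∈ F, v ∈ e}
            Adj := fun a b => s(a, b) ∈ F
            adj_sub := fun h => hF.1 h
            edge_vert := fun {a b} h => ⟨_, h, by simp⟩
            symm := ⟨fun a b h => by rw [Sym2.eq_swap]; exact h⟩ }, ?_, ?_⟩
  · rintro v ⟨e, he, hv⟩
    obtain ⟨w, rfl⟩ := hv
    refine ⟨w, he, ?_⟩
    intro w' hw'
    have := hF.2 _ he _ hw' v (by simp) (by simp)
    exact (Sym2.congr_right.1 this).symm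
  · congr 1
    ext e
    induction e with
    | _ a b => rfl

lemma exists_edgeMatching (G : SimpleGraph V) :
    ∃ F, EdgeMatching G F ∧ F.ncard = matchingNumber G := by
  have := Nat.sSup_mem (s := {k | ∃ N : G.Subgraph, N.IsMatching ∧ N.edgeSet.ncard = k})
    ⟨0, ⊥, by intro v hv; exact hv.elim, by simp⟩ (matching_bdd G)
  obtain ⟨N, hN, h⟩ := this
  exact ⟨_, edgeMatching_of_isMatching N hN, h⟩

lemma EdgeMatching.card_verts {F : Set (Sym2 V)} (hF : EdgeMatching G F) :
    {v | ∃ e ∈ F, v ∈ e}.ncard = 2 * F.ncard := by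
  have h1 : {v | ∃ e ∈ F, v ∈ e} = ((F.toFinset.biUnion Sym2.toFinset : Finset V) : Set V) := by
    ext v; simp
  rw [h1, Set.ncard_coe_finset, Finset.card_biUnion]
  · rw [Finset.sum_const_nat (m := 2), mul_comm, Set.ncard_eq_toFinset_card']
    intro e he
    exact Sym2.card_toFinset_of_not_isDiag _ (G.not_isDiag_of_mem_edgeSet (hF.1 (by simpa using he)))
  · intro e he f hf hef
    rw [Function.onFun, Finset.disjoint_left]
    intro v hv hv'
    exact hef (hF.2 e (by simpa using he) f (by simpa using hf) v (by simpa using hv)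
      (by simpa using hv'))

lemma EdgeMatching.mono {F F' : Set (Sym2 V)} (hF : EdgeMatching G F) (h : F' ⊆ F) :
    EdgeMatching G F' :=
  ⟨h.trans hF.1, fun e he f hf => hF.2 e (h he) f (h hf)⟩

/-- m(G) ≤ m(H) + q/2. -/
lemma matchingNumber_le (W S : Set V) (hW : ∀ a b, G.Adj a b → (a ∈ W ∧ b ∈ W) ∨ (a ∈ S ∧ b ∈ S)) :
    2 * matchingNumber G ≤ 2 * matchingNumber (G.induce S) + W.ncard := by
  obtain ⟨F, hF, hc⟩ := exists_edgeMatching G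
  rw [← hc]
  set F1 := {e ∈ F | ∀ v ∈ e, v ∈ W}
  set F2 := {e ∈ F | ∀ v ∈ e, v ∈ S}
  have hcov : F ⊆ F1 ∪ F2 := by
    intro e he
    have hG := hF.1 he
    induction e with
    | _ a b =>
      rcases hW a b hG with h | h
      · left; refine ⟨he, ?_⟩; intro v hv
        rcases Sym2.mem_iff.1 hv with rfl | rfl; exacts [h.1, h.2]
      · right; refine ⟨he, ?_⟩; intro v hv
        rcases Sym2.mem_iff.1 hv with rfl | rfl; exacts [h.1, h.2]
  have h0 : F.ncard ≤ F1.ncard + F2.ncard :=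
    (Set.ncard_le_ncard hcov (Set.toFinite _)).trans (Set.ncard_union_le _ _)
  have h1 : 2 * F1.ncard ≤ W.ncard := by
    rw [← (hF.mono (F' := F1) (fun e he => he.1)).card_verts]
    apply Set.ncard_le_ncard _ (Set.toFinite _)
    rintro v ⟨e, he, hv⟩
    exact he.2 v hv
  have h2 : F2.ncard ≤ matchingNumber (G.induce S) := by
    have hinj : Function.Injective (Sym2.map (Subtype.val : S → V)) :=
      Sym2.map.injective Subtype.val_injective
    have himg : F2 = Sym2.map (Subtype.val : S → V) '' (Sym2.map (Subtype.val : S → V) ⁻¹' F2) := by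
      rw [Set.image_preimage_eq_of_subset]
      intro e he
      induction e with
      | _ a b =>
        exact ⟨s(⟨a, he.2 a (by simp)⟩, ⟨b, he.2 b (by simp)⟩), rfl⟩
    rw [himg, Set.ncard_image_of_injective _ hinj]
    apply EdgeMatching.ncard_le
    refine ⟨?_, ?_⟩
    · intro e he
      have := hF.1 he.1
      induction e with
      | _ a b => exact this
    · intro e he f hf v hv hv'
      apply hinj
      exact hF.2 _ he.1 _ hf.1 v.1 (Sym2.mem_map.2 ⟨v, hv, rfl⟩) (Sym2.mem_map.2 ⟨v, hv', rfl⟩)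
  omega

end Matchings

section LowerBound

lemma exists_even_cycle_of_ne [Fintype V] {G : SimpleGraph V} (σ τ : V → V)
    (hσ : ∀ v, σ (σ v) = v) (hτ : ∀ v, τ (τ v) = v)
    (aσ : ∀ v, G.Adj v (σ v)) (aτ : ∀ v, G.Adj v (τ v)) (i0 : V) (hne : σ i0 ≠ τ i0) :
    ∃ C : G.Subgraph, IsCycleSubgraph C ∧ Even C.verts.ncard := by
  let R : V → V → Prop := fun a b => σ a ≠ τ a ∧ (b = σ a ∨ b = τ a)
  have Rne : ∀ a b, R a b → σ b ≠ τ b := by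
    rintro a b ⟨h1, rfl | rfl⟩ h
    · rw [hσ] at h
      apply h1
      have := congrArg τ h
      rw [hτ] at this
      exact this.symm
    · rw [hτ] at h
      apply h1
      have := congrArg σ h
      rw [hσ] at this
      exact this.symm
  have Rsymm : ∀ a b, R a b → R b a := by
    intro a b h
    refine ⟨Rne a b h, ?_⟩
    rcases h.2 with h | h
    · left; rw [h, hσ]
    · right; rw [h, hτ]
  let P : V → Prop := fun v => Relation.ReflTransGen R i0 v
  have Pne : ∀ v, P v → σ v ≠ τ v := by
    intro v hv
    cases hv with
    | refl => exact hne
    | tail _ h => exact Rne _ _ h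
  have Pstep : ∀ a b, P a → R a b → P b := fun a b h h' => Relation.ReflTransGen.tail h h'
  let C : G.Subgraph :=
    { verts := {v | P v}
      Adj := fun a b => P a ∧ R a b
      adj_sub := by
        rintro a b ⟨_, _, rfl | rfl⟩
        · exact aσ a
        · exact aτ a
      edge_vert := fun h => h.1
      symm := ⟨fun a b h => ⟨Pstep _ _ h.1 h.2, Rsymm _ _ h.2⟩⟩ }
  refine ⟨C, ⟨?_, ?_⟩, ?_⟩
  · rw [subgraph_connected_iff_rtg]
    refine ⟨i0, Relation.ReflTransGen.refl, ?_⟩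
    intro v hv
    have hv' : Relation.ReflTransGen R i0 v := hv
    clear hv
    induction hv' with
    | refl => exact .refl
    | tail h1 h2 ih => exact ih.tail ⟨h1, h2⟩
  · intro v hv
    have : {w | C.Adj v w} = {σ v, τ v} := by
      ext w
      constructor
      · rintro ⟨_, _, h⟩; exact h
      · intro h; exact ⟨hv, Pne v hv, h⟩
    rw [this, Set.ncard_pair (Pne v hv)]
  · rw [Set.ncard_eq_toFinset_card']
    have hz : ∑ v ∈ C.verts.toFinset, (1 : ZMod 2) = 0 := by
      refine Finset.sum_involution (fun v _ => σ v) ?_ ?_ ?_ ?_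
      · intro a _; decide
      · intro a _ _ h; exact (aσ a).ne h.symm
      · intro a ha
        have ha' : P a := Set.mem_toFinset.1 ha
        have : P (σ a) := Pstep a _ ha' ⟨Pne a ha', Or.inl rfl⟩
        exact Set.mem_toFinset.2 this
      · intro a _; exact hσ a
    rw [Finset.sum_const, nsmul_eq_mul, mul_one] at hz
    rwa [ZMod.natCast_eq_zero_iff_even] at hz

lemma det_mod_two [Fintype V] [DecidableEq V] {G : SimpleGraph V} (σ : V → V)
    (hσ : ∀ v, σ (σ v) = v) (aσ : ∀ v, G.Adj v (σ v))
    (hno : ∀ C : G.Subgraph, IsCycleSubgraph C → ¬ Even C.verts.ncard)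
    (A : Matrix V V (ZMod 2)) (hA : ∀ i j, A i j = if G.Adj i j then 1 else 0) :
    A.det = 1 := by
  let s : Equiv.Perm V := ⟨σ, σ, hσ, hσ⟩
  have h1 : ∀ a : ℤˣ, ((a : ℤ) : ZMod 2) = 1 := by
    intro a
    rcases Int.units_eq_one_or a with rfl | rfl <;> decide
  rw [Matrix.det_apply']
  simp only [h1, one_mul]
  rw [← Finset.add_sum_erase _ _ (Finset.mem_univ s)]
  have hs : ∏ i, A (s i) i = 1 := by
    apply Finset.prod_eq_one
    intro i _
    rw [hA, if_pos]
    exact (aσ i).symm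
  rw [hs, add_eq_left]
  refine Finset.sum_involution (fun p _ => p⁻¹) ?_ ?_ ?_ ?_
  · intro p _
    have : ∏ i, A (p⁻¹ i) i = ∏ i, A (p i) i := by
      rw [← Equiv.prod_comp p]
      apply Finset.prod_congr rfl
      intro i _
      rw [show p⁻¹ (p i) = i by simp]
      rw [hA, hA, G.adj_comm]
    rw [this]
    exact CharTwo.add_self_eq_zero _
  · intro p hp hne hinv
    have hp' : p ≠ s := (Finset.mem_erase.1 hp).1
    have hadj : ∀ i, G.Adj i (p i) := by
      intro i
      by_contra h
      apply hne
      apply Finset.prod_eq_zero (Finset.mem_univ i)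
      rw [hA, if_neg]
      exact fun h' => h h'.symm
    have hpp : ∀ i, p (p i) = i := by
      intro i
      nth_rewrite 1 [← hinv]
      simp
    obtain ⟨i, hi⟩ : ∃ i, p i ≠ s i := by
      by_contra h
      push Not at h
      exact hp' (Equiv.ext h)
    obtain ⟨C, hC1, hC2⟩ := exists_even_cycle_of_ne (G := G) p σ hpp hσ hadj aσ i hi
    exact hno C hC1 hC2
  · intro p hp
    rw [Finset.mem_erase] at hp ⊢
    refine ⟨fun h => hp.1 ?_, Finset.mem_univ _⟩
    rw [← inv_inv p, h]
    rfl
  · intro p _; exact inv_inv p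

/-- Reduction of Gaussian integers modulo `1 + i`. -/
noncomputable def gaussMod : GaussianInt →+* ZMod 2 :=
  Zsqrtd.lift ⟨1, by decide⟩

lemma det_hMatrix_ne_zero [Fintype V] [DecidableEq V] (M : MixedGraph V) (σ : V → V)
    (hσ : ∀ v, σ (σ v) = v) (aσ : ∀ v, M.graph.Adj v (σ v))
    (hno : ∀ C : M.graph.Subgraph, IsCycleSubgraph C → ¬ Even C.verts.ncard) :
    M.hMatrix.det ≠ 0 := by
  let B : Matrix V V GaussianInt := Matrix.of fun u v =>
    if M.arc u v then ⟨0, 1⟩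
    else if M.arc v u then ⟨0, -1⟩
    else if M.graph.Adj u v then 1 else 0
  have h1 : GaussianInt.toComplex.mapMatrix B = M.hMatrix := by
    ext u v
    simp only [RingHom.mapMatrix_apply, Matrix.map_apply, B, Matrix.of_apply, MixedGraph.hMatrix]
    split_ifs <;> simp [GaussianInt.toComplex_def]
  have h2 : (gaussMod.mapMatrix B).det = 1 := by
    apply det_mod_two σ hσ aσ hno
    intro u v
    simp only [RingHom.mapMatrix_apply, Matrix.map_apply, B, Matrix.of_apply]
    have e1 := M.arc_adj u v
    have e2 := M.arc_adj v u
    by_cases c1 : M.arc u v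
    · simp [c1, e1 c1, gaussMod]
    · by_cases c2 : M.arc v u
      · simp only [c1, c2, (e2 c2).symm, gaussMod, if_true]
        simp
      · simp [c1, c2, apply_ite gaussMod]
  intro h0
  rw [← h1, ← RingHom.map_det, GaussianInt.toComplex_eq_zero] at h0
  rw [← RingHom.map_det, h0, map_zero] at h2
  exact zero_ne_one h2

lemma rank_lower_bound [Fintype V] [DecidableEq V] (M : MixedGraph V) :
    2 * matchingNumber M.graph ≤ M.hRank + 2 * evenCycleCount M.graph := by
  set E := {C : M.graph.Subgraph | IsCycleSubgraph C ∧ Even C.verts.ncard} with hE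
  obtain ⟨F, hF, hFc⟩ := exists_edgeMatching M.graph
  have hch : ∀ C : M.graph.Subgraph, ∃ v : Option V, C ∈ E → ∃ w, v = some w ∧ w ∈ C.verts := by
    intro C
    by_cases h : C ∈ E
    · obtain ⟨w, hw⟩ := h.1.1.nonempty
      exact ⟨some w, fun _ => ⟨w, rfl, hw⟩⟩
    · exact ⟨none, fun h' => absurd h' h⟩
  choose c hc using hch
  let D : Set V := {v | some v ∈ c '' E}
  have hD : D.ncard ≤ E.ncard := by
    refine le_trans ?_ (Set.ncard_image_le (f := c) (Set.toFinite E))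
    exact Set.ncard_le_ncard_of_injOn some (fun a ha => ha)
      (fun a _ b _ h => Option.some_injective _ h) (Set.toFinite _)
  have hDhit : ∀ C ∈ E, ∃ d ∈ D, d ∈ C.verts := by
    intro C hC
    obtain ⟨w, h1, h2⟩ := hc C hC
    exact ⟨w, ⟨C, hC, h1⟩, h2⟩
  set F' := {e ∈ F | ∀ d ∈ D, d ∉ e}
  set F2 := {e ∈ F | ∃ d ∈ D, d ∈ e}
  have hcov : F ⊆ F' ∪ F2 := by
    intro e he
    by_cases h : ∃ d ∈ D, d ∈ e
    · right; exact ⟨he, h⟩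
    · left; push Not at h; exact ⟨he, h⟩
  have h0 : F.ncard ≤ F'.ncard + F2.ncard :=
    (Set.ncard_le_ncard hcov (Set.toFinite _)).trans (Set.ncard_union_le _ _)
  have hF2 : F2.ncard ≤ D.ncard := by
    have hch2 : ∀ e : Sym2 V, ∃ d : V, e ∈ F2 → d ∈ D ∧ d ∈ e := by
      intro e
      by_cases h : e ∈ F2
      · obtain ⟨d, hd⟩ := h.2; exact ⟨d, fun _ => hd⟩
      · exact ⟨e.out.1, fun h' => absurd h' h⟩
    choose g hg using hch2
    refine Set.ncard_le_ncard_of_injOn g (fun e he => (hg e he).1) ?_ (Set.toFinite _)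
    intro e he f hf h
    exact hF.2 e he.1 f hf.1 (g e) (hg e he).2 (h ▸ (hg f hf).2)
  have hF' : EdgeMatching M.graph F' := hF.mono (fun e he => he.1)
  have hcard := hF'.card_verts
  set S := {v | ∃ e ∈ F', v ∈ e} with hS
  have hpart : ∀ v : S, ∃ w : S, s(v.1, w.1) ∈ F' := by
    rintro ⟨v, e, he, w, rfl⟩
    exact ⟨⟨w, _, he, by simp⟩, he⟩
  choose σ hσ using hpart
  have hrank : (M.induce S).hRank = Fintype.card S := by
    apply Matrix.rank_of_isUnit
    rw [Matrix.isUnit_iff_isUnit_det, isUnit_iff_ne_zero]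
    apply det_hMatrix_ne_zero (M.induce S) σ
    · intro v
      have := hF'.2 _ (hσ v) _ (hσ (σ v)) (σ v).1 (by simp) (by simp)
      rw [Sym2.eq_iff] at this
      apply Subtype.ext
      rcases this with ⟨a, b⟩ | ⟨a, b⟩
      · rw [← b, ← a]
      · exact a.symm
    · intro v
      exact hF'.1 (hσ v)
    · intro C hC1 hC2
      let f := SimpleGraph.Embedding.induce (G := M.graph) S
      obtain ⟨d, hd, hd'⟩ := hDhit (C.map f.toHom) ⟨(isCycleSubgraph_map_iff f C).2 hC1,
        (congrArg Even (ncard_verts_map f C)).mpr hC2⟩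
      obtain ⟨v, _, rfl⟩ := hd'
      obtain ⟨e, he, hv⟩ := v.2
      exact he.2 _ hd hv
  have hle : (M.induce S).hRank ≤ M.hRank := by
    have : (M.induce S).hMatrix = M.hMatrix.submatrix Subtype.val Subtype.val := by
      ext u v; rfl
    unfold MixedGraph.hRank
    rw [this]
    exact Matrix.rank_submatrix_le _ _ _
  have hcS : Fintype.card S = S.ncard := by
    rw [← Nat.card_eq_fintype_card]; rfl
  have : evenCycleCount M.graph = E.ncard := rfl
  omega

end LowerBound

section LinAlg

open Complex

lemma rank_reduction [Fintype V] [DecidableEq V] (A : Matrix V V ℂ) (S : Set V) (x : V)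
    (v : ℕ → V) (ψ : ℕ → ℂ) (q : ℕ) (hq : Even q) (hq3 : 3 ≤ q)
    (hv0 : v 0 = x) (hvq : v q = x)
    (hinj : ∀ i < q, ∀ j < q, v i = v j → i = j)
    (hS : ∀ u, u ∈ S ↔ ∀ i, 0 < i → i < q → u ≠ v i)
    (hψ0 : ψ 0 = 1) (hψq : ψ q = 1) (hψ : ∀ i, ψ i ≠ 0)
    (hA1 : ∀ k < q, A (v k) (v (k + 1)) * ψ (k + 1) = I * ψ k)
    (hA2 : ∀ k < q, A (v (k + 1)) (v k) * ψ k = - I * ψ (k + 1))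
    (hz1 : ∀ i, 0 < i → i < q → ∀ w, A (v i) w ≠ 0 → w = v (i - 1) ∨ w = v (i + 1))
    (hz2 : ∀ i, 0 < i → i < q → ∀ w, A w (v i) ≠ 0 → w = v (i - 1) ∨ w = v (i + 1)) :
    A.rank + 2 = q + (A.submatrix (Subtype.val : S → V) (Subtype.val : S → V)).rank := by
  set B := A.submatrix (Subtype.val : S → V) (Subtype.val : S → V) with hB
  have hxS : x ∈ S := by
    rw [hS]; intro i h0 hi h
    have := hinj i hi 0 (by omega) (by rw [← h, hv0])
    omega
  have hnS : ∀ u, u ∉ S → ∃ i, 0 < i ∧ i < q ∧ v i = u := by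
    intro u hu
    rw [hS] at hu
    push Not at hu
    obtain ⟨i, h1, h2, h3⟩ := hu
    exact ⟨i, h1, h2, h3.symm⟩
  -- splitting of sums
  have hcompl : (Finset.univ.filter (fun u => ¬ u ∈ S)) = (Finset.Ioo 0 q).image v := by
    ext u
    simp only [Finset.mem_filter, Finset.mem_univ, true_and, Finset.mem_image, Finset.mem_Ioo]
    constructor
    · intro h; obtain ⟨i, h1, h2, h3⟩ := hnS u h; exact ⟨i, ⟨h1, h2⟩, h3⟩
    · rintro ⟨i, ⟨h1, h2⟩, rfl⟩ h
      exact (hS _).1 h i h1 h2 rfl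
  have hinjOn : Set.InjOn v (Finset.Ioo 0 q : Finset ℕ) := by
    intro i hi j hj h
    simp at hi hj
    exact hinj i hi.2 j hj.2 h
  have hcard : Fintype.card V = Fintype.card S + (q - 1) := by
    have h1 := Finset.card_filter_add_card_filter_not (s := (Finset.univ : Finset V)) (fun u => u ∈ S)
    rw [hcompl, Finset.card_image_of_injOn hinjOn, Nat.card_Ioo] at h1
    rw [← Finset.card_univ, ← h1, Fintype.card_subtype]
    simp
  have hsum : ∀ g : V → ℂ, ∑ w, g w = ∑ s : S, g s.1 + ∑ i ∈ Finset.Ioo 0 q, g (v i) := by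
    intro g
    rw [← Finset.sum_filter_add_sum_filter_not Finset.univ (fun u => u ∈ S), hcompl,
      Finset.sum_image hinjOn]
    congr 1
    exact (Finset.sum_subtype _ (by simp) _)
  -- rows
  have hrow_cyc : ∀ (f : V → ℂ) i, 0 < i → i < q → (A.mulVec f) (v i) =
      A (v i) (v (i - 1)) * f (v (i - 1)) + A (v i) (v (i + 1)) * f (v (i + 1)) := by
    intro f i h0 hi
    have hne : v (i - 1) ≠ v (i + 1) := by
      intro h
      by_cases hi' : i + 1 = q
      · rw [hi', hvq, ← hv0] at h
        have := hinj _ (by omega) _ (by omega) h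
        omega
      · have := hinj _ (by omega) _ (by omega) h
        omega
    rw [Matrix.mulVec, dotProduct,
      ← Finset.sum_pair (f := fun w => A (v i) w * f w) hne]
    symm
    apply Finset.sum_subset (Finset.subset_univ _)
    intro w _ hw
    by_contra h
    have := hz1 i h0 hi w (fun h' => h (by rw [h', zero_mul]))
    simp at hw
    tauto
  have hrow_S : ∀ (f : V → ℂ) (u : S), u.1 ≠ x → (A.mulVec f) u =
      (B.mulVec (fun s => f s.1)) u := by
    intro f u hu
    simp only [Matrix.mulVec, dotProduct]
    rw [hsum]
    rw [Finset.sum_eq_zero (s := Finset.Ioo 0 q), add_zero]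
    · rfl
    intro i hi
    rw [Finset.mem_Ioo] at hi
    by_contra h
    have hh := hz2 i hi.1 hi.2 u.1 (fun h' => h (by rw [h', zero_mul]))
    have hu2 := (hS _).1 u.2
    rcases hh with hh | hh
    · by_cases h1 : i = 1
      · subst h1; exact hu (hh.trans hv0)
      · exact hu2 (i - 1) (by omega) (by omega) hh
    · by_cases h1 : i + 1 = q
      · rw [h1] at hh; exact hu (hh.trans hvq)
      · exact hu2 (i + 1) (by omega) (by omega) hh
  have hrow_x : ∀ (f : V → ℂ), (A.mulVec f) x =
      (B.mulVec (fun s => f s.1)) ⟨x, hxS⟩ + (A x (v 1) * f (v 1) +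
        A x (v (q - 1)) * f (v (q - 1))) := by
    intro f
    simp only [Matrix.mulVec, dotProduct]
    rw [hsum]
    congr 1
    have hne : 1 ≠ q - 1 := by omega
    rw [← Finset.sum_pair (f := fun i => A x (v i) * f (v i)) hne]
    symm
    apply Finset.sum_subset
    · intro i hi
      simp at hi
      rw [Finset.mem_Ioo]; omega
    · intro i hi hw
      rw [Finset.mem_Ioo] at hi
      by_contra h
      have hh := hz2 i hi.1 hi.2 x (fun h' => h (by rw [h', zero_mul]))
      have hu2 := (hS _).1 hxS
      simp at hw
      rcases hh with hh | hh
      · exact hu2 (i - 1) (by omega) (by omega) hh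
      · exact hu2 (i + 1) (by omega) (by omega) hh
  -- index function
  have hidx : ∃ idx : V → ℕ, ∀ u, u ∉ S → 0 < idx u ∧ idx u < q ∧ v (idx u) = u := by
    refine ⟨fun u => if h : u ∉ S then (hnS u h).choose else 0, fun u hu => ?_⟩
    simp only [hu, not_false_eq_true, dif_pos]
    exact (hnS u hu).choose_spec
  obtain ⟨idx, hidx⟩ := hidx
  let Φ : ((S → ℂ) × ℂ) →ₗ[ℂ] (V → ℂ) :=
    { toFun := fun p u => if h : u ∈ S then p.1 ⟨u, h⟩ else
        (if Even (idx u) then ψ (idx u) * p.1 ⟨x, hxS⟩ else ψ (idx u) * p.2)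
      map_add' := by
        intro p p'
        ext u
        simp only [Pi.add_apply, Prod.fst_add, Prod.snd_add]
        split_ifs <;> ring
      map_smul' := by
        intro c p
        ext u
        simp only [Pi.smul_apply, Prod.smul_fst, Prod.smul_snd, smul_eq_mul, RingHom.id_apply]
        split_ifs <;> ring }
  have hΦS : ∀ p (s : S), Φ p s.1 = p.1 s := by
    intro p s
    simp [Φ]
  have hΦv : ∀ p i, i ≤ q → Φ p (v i) = ψ i * (if Even i then p.1 ⟨x, hxS⟩ else p.2) := by
    intro p i hi
    by_cases h0 : i = 0
    · subst h0
      rw [hv0, hψ0, hΦS p ⟨x, hxS⟩]; simp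
    by_cases h1 : i = q
    · subst h1
      rw [hvq, hψq, hΦS p ⟨x, hxS⟩]; simp [hq]
    have hns : v i ∉ S := fun h => (hS _).1 h i (by omega) (by omega) rfl
    obtain ⟨_, h3, h4⟩ := hidx _ hns
    have h5 : idx (v i) = i := hinj _ h3 _ (by omega) h4
    simp only [Φ, LinearMap.coe_mk, AddHom.coe_mk, hns, dif_neg, not_false_eq_true, h5]
    split_ifs <;> rfl
  have hΦinj : Function.Injective Φ := by
    rintro ⟨g, t⟩ ⟨g', t'⟩ h
    have h1 : g = g' := by
      ext s
      have := congrFun h s.1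
      rw [hΦS, hΦS] at this; exact this
    have h2 := congrFun h (v 1)
    rw [hΦv _ _ (by omega), hΦv _ _ (by omega)] at h2
    have := mul_left_cancel₀ (hψ 1) h2
    simp at this
    rw [h1, this]
  -- cycle equation
  have hcyc_eq : ∀ (f : V → ℂ) i, 0 < i → i < q → (A.mulVec f) (v i) =
      I * ψ i * (f (v (i + 1)) / ψ (i + 1) - f (v (i - 1)) / ψ (i - 1)) := by
    intro f i h0 hi
    rw [hrow_cyc f i h0 hi]
    have e1 := hA1 i hi
    have e2 := hA2 (i - 1) (by omega)
    rw [Nat.sub_add_cancel h0] at e2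
    have n1 := hψ (i + 1)
    have n2 := hψ (i - 1)
    rw [← eq_div_iff n1] at e1
    rw [← eq_div_iff n2] at e2
    rw [e1, e2]
    field_simp
    ring
  have hx_eq : ∀ (f : V → ℂ), A x (v 1) * f (v 1) + A x (v (q - 1)) * f (v (q - 1)) =
      I * (f (v 1) / ψ 1 - f (v (q - 1)) / ψ (q - 1)) := by
    intro f
    have e1 := hA1 0 (by omega)
    have e2 := hA2 (q - 1) (by omega)
    rw [Nat.sub_add_cancel (by omega), hvq, hψq] at e2
    rw [hv0, hψ0, zero_add] at e1
    have n1 := hψ 1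
    have n2 := hψ (q - 1)
    rw [← eq_div_iff n1] at e1
    rw [← eq_div_iff n2] at e2
    rw [e1, e2]
    field_simp
    ring
  have hodd1 : ¬ Even (q - 1) := by
    rw [Nat.not_even_iff_odd]; exact Nat.Even.sub_odd (by omega) hq odd_one
  have hker : LinearMap.ker A.mulVecLin =
      ((LinearMap.ker B.mulVecLin).prod (⊤ : Submodule ℂ ℂ)).map Φ := by
    ext f
    rw [Submodule.mem_map]
    constructor
    · intro hf
      have hf' : A.mulVec f = 0 := hf
      have hstep : ∀ i, 0 < i → i < q → f (v (i + 1)) / ψ (i + 1) = f (v (i - 1)) / ψ (i - 1) := by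
        intro i h0 hi
        have := congrFun hf' (v i)
        rw [hcyc_eq f i h0 hi] at this
        simp [I_ne_zero, hψ i] at this
        exact sub_eq_zero.1 this
      have hall : ∀ i, i + 1 ≤ q → f (v i) / ψ i = (if Even i then f x else f (v 1) / ψ 1) ∧
          f (v (i+1)) / ψ (i+1) = (if Even (i+1) then f x else f (v 1) / ψ 1) := by
        intro i
        induction i with
        | zero => intro _; simp [hv0, hψ0]
        | succ k ih =>
          intro hk
          obtain ⟨ih1, ih2⟩ := ih (by omega)
          refine ⟨ih2, ?_⟩
          rw [hstep (k + 1) (by omega) (by omega)]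
          simp only [Nat.add_sub_cancel]
          rw [ih1]
          simp [Nat.even_add_one]
      have hall' : ∀ i, i < q → f (v i) = ψ i * (if Even i then f x else f (v 1) / ψ 1) := by
        intro i hi
        rw [← (hall i (by omega)).1]
        field_simp [hψ i]
      refine ⟨(fun s => f s.1, f (v 1) / ψ 1), ?_, ?_⟩
      · refine ⟨?_, trivial⟩
        show B.mulVec (fun s => f s.1) = 0
        ext s
        by_cases hs : s.1 = x
        · have h1 := hrow_x f
          rw [hx_eq, hf', (hall (q - 1) (by omega)).1, if_neg hodd1] at h1
          have : s = ⟨x, hxS⟩ := Subtype.ext hs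
          rw [this]
          simpa using h1.symm
        · rw [← hrow_S f s hs, hf']; rfl
      · ext u
        by_cases hu : u ∈ S
        · exact hΦS _ ⟨u, hu⟩
        · obtain ⟨i, h1, h2, rfl⟩ := hnS u hu
          rw [hΦv _ _ h2.le, hall' i h2]
    · rintro ⟨p, ⟨hp1, _⟩, rfl⟩
      have hp : B.mulVec p.1 = 0 := hp1
      show A.mulVec (Φ p) = 0
      have hr : (fun s : S => Φ p s.1) = p.1 := funext (hΦS p)
      ext u
      by_cases hu : u ∈ S
      · by_cases hux : u = x
        · rw [hux, hrow_x, hx_eq, hr, hp, hΦv _ _ (by omega), hΦv _ _ (by omega), if_neg hodd1,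
            mul_div_cancel_left₀ _ (hψ _), mul_div_cancel_left₀ _ (hψ _)]
          simp
        · rw [hrow_S _ ⟨u, hu⟩ hux, hr, hp]; rfl
      · obtain ⟨i, h1, h2, rfl⟩ := hnS u hu
        rw [hcyc_eq _ _ h1 h2, hΦv _ _ (by omega), hΦv _ _ (by omega),
            mul_div_cancel_left₀ _ (hψ _), mul_div_cancel_left₀ _ (hψ _)]
        have : Even (i + 1) ↔ Even (i - 1) := by
          obtain ⟨k, rfl⟩ : ∃ k, i = k + 1 := ⟨i - 1, by omega⟩
          simp [Nat.even_add_one]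
        simp [this]
  have hfin : Module.finrank ℂ (LinearMap.ker A.mulVecLin) =
      Module.finrank ℂ (LinearMap.ker B.mulVecLin) + 1 := by
    have hp : (LinearMap.ker B.mulVecLin).prod (⊤ : Submodule ℂ ℂ) =
        LinearMap.range ((LinearMap.ker B.mulVecLin).subtype.prodMap
          (LinearMap.id : ℂ →ₗ[ℂ] ℂ)) := by
      rw [LinearMap.range_prodMap, Submodule.range_subtype, LinearMap.range_id]
    rw [hker, ← (Submodule.equivMapOfInjective Φ hΦinj _).finrank_eq, hp,
      LinearMap.finrank_range_of_inj, Module.finrank_prod]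
    · simp
    · exact Function.Injective.prodMap (Submodule.subtype_injective _) Function.injective_id
  have r1 := LinearMap.finrank_range_add_finrank_ker A.mulVecLin
  have r2 := LinearMap.finrank_range_add_finrank_ker B.mulVecLin
  rw [Module.finrank_fintype_fun_eq_card] at r1 r2
  unfold Matrix.rank
  have hcard' : Fintype.card V = Fintype.card {x // x ∈ S} + (q - 1) := hcard
  omega

end LinAlg

section WalkData

open Complex

lemma hMatrix_adj [Fintype V] [DecidableEq V] (M : MixedGraph V) {a b : V}
    (h : M.hMatrix a b ≠ 0) : M.graph.Adj a b := by
  unfold MixedGraph.hMatrix at h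
  have e1 := M.arc_adj a b
  have e2 := M.arc_adj b a
  by_contra hn
  have hn' : ¬ M.graph.Adj b a := fun h' => hn h'.symm
  have c1 : ¬ M.arc a b := fun h => hn (e1 h)
  have c2 : ¬ M.arc b a := fun h => hn' (e2 h)
  simp [c1, c2, hn] at h

lemma hMatrix_mul [Fintype V] [DecidableEq V] (M : MixedGraph V) {a b : V}
    (h : M.graph.Adj a b) : M.hMatrix a b * M.hMatrix b a = 1 := by
  unfold MixedGraph.hMatrix
  have e1 := M.arc_antisymm a b
  by_cases c1 : M.arc a b
  · have c2 := e1 c1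
    simp [c1, c2]
  · by_cases c2 : M.arc b a
    · simp [c1, c2]
    · simp [c1, c2, h, h.symm]

lemma walk_prod_eq {G : SimpleGraph V} (g : V → V → ℂ) {a b : V} (w : G.Walk a b) :
    (w.darts.map (fun d => g d.toProd.1 d.toProd.2)).prod =
      ∏ i ∈ Finset.range w.length, g (w.getVert i) (w.getVert (i + 1)) := by
  induction w with
  | nil => simp
  | cons h p ih =>
    simp only [SimpleGraph.Walk.darts_cons, List.map_cons, List.prod_cons,
      SimpleGraph.Walk.length_cons]
    rw [Finset.prod_range_succ', ih, mul_comm]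
    simp

lemma darts_prod_eq [Fintype V] [DecidableEq V] (M : MixedGraph V) (l : List M.graph.Dart) :
    (l.map (fun d => M.hMatrix d.toProd.1 d.toProd.2)).prod =
      I ^ (l.countP fun d => M.arc d.toProd.1 d.toProd.2) *
      (-I) ^ (l.countP fun d => M.arc d.toProd.2 d.toProd.1) := by
  induction l with
  | nil => simp
  | cons d l ih =>
    rw [List.map_cons, List.prod_cons, ih, List.countP_cons, List.countP_cons]
    have e1 := M.arc_antisymm d.toProd.1 d.toProd.2
    have hd := d.adj
    unfold MixedGraph.hMatrix
    by_cases c1 : M.arc d.toProd.1 d.toProd.2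
    · have c2 := e1 c1
      simp only [c1, c2, if_true]
      simp
      ring
    · by_cases c2 : M.arc d.toProd.2 d.toProd.1
      · simp only [c1, c2]
        simp
        ring
      · simp [c1, c2, hd]

lemma I_pow_sig (f b q : ℕ) (hq : Even q) (h : ((f : ℤ) - (b : ℤ)).natAbs % 4 = q % 4) :
    I ^ f * (-I) ^ b = I ^ q := by
  obtain ⟨k, rfl⟩ := hq
  have h4 : I ^ 4 = 1 := I_pow_four
  have hneg : (-I) = I ^ 3 := by rw [I_pow_three]
  rw [hneg, ← pow_mul, ← pow_add]
  have hm : (f + 3 * b) % 4 = (k + k) % 4 := by omega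
  rw [← Nat.div_add_mod (f + 3 * b) 4, ← Nat.div_add_mod (k + k) 4, hm]
  simp [pow_add, pow_mul]

lemma hRank_induce [Fintype V] [DecidableEq V] (M : MixedGraph V) (S : Set V)
    (i1 i2 : Fintype S) (i3 : DecidableEq S) :
    @MixedGraph.hRank S i1 i3 (M.induce S) =
      @Matrix.rank S S ℂ i2 _
        (M.hMatrix.submatrix (Subtype.val : S → V) (Subtype.val : S → V)) := by
  have : i1 = i2 := Subsingleton.elim _ _
  subst this
  rfl

/-- The rank identity r(G) + 2 = q + r(H). -/
lemma rank_pendant_even [Fintype V] [DecidableEq V] (M : MixedGraph V)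
    (C : M.graph.Subgraph) (x : V) (hpc : IsPendantCycle M.graph C x)
    (heven : Even C.verts.ncard)
    (hsig : CycleSig M C (fun s => s % 4 = C.verts.ncard % 4)) :
    M.hRank + 2 = C.verts.ncard + (M.induce (C.vertsᶜ ∪ {x})).hRank := by
  obtain ⟨hC, hxC, -, hdeg⟩ := hpc
  obtain ⟨u, w0, hcyc0, hsupp0, -, hs⟩ := hsig
  have hx0 : x ∈ w0.support := by
    have : x ∈ {v | v ∈ w0.support} := by rw [hsupp0]; exact hxC
    exact this
  obtain ⟨w, hcyc, hsupp, hprod⟩ : ∃ w : M.graph.Walk x x, w.IsCycle ∧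
      (∀ a, a ∈ w.support ↔ a ∈ C.verts) ∧
      (w.darts.map (fun d => M.hMatrix d.toProd.1 d.toProd.2)).prod = I ^ C.verts.ncard := by
    refine ⟨w0.rotate x hx0, hcyc0.rotate hx0, ?_, ?_⟩
    · intro a
      rw [← hsupp0]
      exact SimpleGraph.Walk.mem_support_rotate_iff _ _ _
    · rw [((w0.rotate_darts x hx0).perm.map _).prod_eq, darts_prod_eq]
      exact I_pow_sig _ _ _ heven hs
  set q := w.length with hq
  set v := w.getVert with hv
  have hq3 : 3 ≤ q := hcyc.three_le_length
  have hv0 : v 0 = x := w.getVert_zero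
  have hvq : v q = x := w.getVert_length
  have hinj : ∀ i < q, ∀ j < q, v i = v j → i = j := by
    intro i hi j hj h
    exact hcyc.getVert_injOn' (by simp only [Set.mem_ofPred_eq]; omega)
      (by simp only [Set.mem_ofPred_eq]; omega) h
  have hmem : ∀ a, a ∈ C.verts ↔ ∃ i < q, v i = a := by
    intro a
    rw [← hsupp, SimpleGraph.Walk.mem_support_iff_exists_getVert]
    constructor
    · rintro ⟨i, h1, h2⟩
      by_cases h : i = q
      · exact ⟨0, by omega, by rw [hv0, ← h1, h]; exact hvq.symm⟩
      · exact ⟨i, by omega, h1⟩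
    · rintro ⟨i, h1, h2⟩; exact ⟨i, h2, h1.le⟩
  have hcard : C.verts.ncard = q := by
    have : C.verts = ((Finset.range q).image v : Finset V) := by
      ext a; rw [hmem]; simp
    rw [this, Set.ncard_coe_finset, Finset.card_image_of_injOn, Finset.card_range]
    intro i hi j hj h
    simp at hi hj
    exact hinj i hi j hj h
  have hadj : ∀ i < q, M.graph.Adj (v i) (v (i + 1)) := fun i hi => w.adj_getVert_succ hi
  have hnb : ∀ i, 0 < i → i < q → ∀ a, M.graph.Adj (v i) a → a = v (i - 1) ∨ a = v (i + 1) := by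
    intro i h0 hi a ha
    have hvx : v i ≠ x := by
      intro h
      have := hinj i hi 0 (by omega) (by rw [h, hv0])
      omega
    have h2 := hdeg (v i) ((hmem _).2 ⟨i, hi, rfl⟩) hvx
    have hne : v (i - 1) ≠ v (i + 1) := by
      intro h
      by_cases hi' : i + 1 = q
      · rw [hi', hvq, ← hv0] at h
        have := hinj _ (by omega) _ (by omega) h
        omega
      · have := hinj _ (by omega) _ (by omega) h
        omega
    have hsub : ({v (i - 1), v (i + 1)} : Set V) ⊆ {b | M.graph.Adj (v i) b} := by
      rintro b (rfl | rfl)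
      · have := hadj (i - 1) (by omega)
        rw [Nat.sub_add_cancel h0] at this
        exact this.symm
      · exact hadj i hi
    have heq := Set.eq_of_subset_of_ncard_le hsub
      (by rw [h2, Set.ncard_pair hne]) (Set.toFinite _)
    have : a ∈ ({v (i - 1), v (i + 1)} : Set V) := by rw [heq]; exact ha
    exact this
  have hS : ∀ a, a ∈ C.vertsᶜ ∪ {x} ↔ ∀ i, 0 < i → i < q → a ≠ v i := by
    intro a
    constructor
    · rintro (h | h) i h0 hi rfl
      · exact h ((hmem _).2 ⟨i, hi, rfl⟩)
      · have := hinj i hi 0 (by omega) (by rw [hv0]; exact h)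
        omega
    · intro h
      by_cases ha : a ∈ C.verts
      · right
        obtain ⟨i, hi, rfl⟩ := (hmem a).1 ha
        by_cases h0 : i = 0
        · subst h0; exact hv0
        · exact absurd rfl (h i (by omega) hi)
      · left; exact ha
  let c : ℕ → ℂ := fun i => if i < q then M.hMatrix (v i) (v (i + 1)) else 1
  have hc0 : ∀ i, c i ≠ 0 := by
    intro i
    by_cases hi : i < q
    · simp only [c, if_pos hi]
      exact left_ne_zero_of_mul (by rw [hMatrix_mul M (hadj i hi)]; exact one_ne_zero)
    · simp [c, hi]
  let ψ : ℕ → ℂ := fun i => ∏ k ∈ Finset.range i, (I / c k)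
  have hψs : ∀ i, ψ (i + 1) = ψ i * (I / c i) := fun i => Finset.prod_range_succ _ _
  have hψ : ∀ i, ψ i ≠ 0 := by
    intro i
    exact Finset.prod_ne_zero_iff.2 (fun k _ => div_ne_zero I_ne_zero (hc0 k))
  have hψq : ψ q = 1 := by
    simp only [ψ]
    rw [Finset.prod_div_distrib, Finset.prod_const, Finset.card_range]
    have : ∏ k ∈ Finset.range q, c k = I ^ q := by
      rw [hcard] at hprod
      refine Eq.trans ?_ ((walk_prod_eq (fun a b => M.hMatrix a b) w).symm.trans hprod)
      apply Finset.prod_congr rfl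
      intro i hi
      simp only [c, if_pos (Finset.mem_range.1 hi)]
      rw [hv]
    rw [this, div_self (pow_ne_zero _ I_ne_zero)]
  have key := rank_reduction M.hMatrix (C.vertsᶜ ∪ {x}) x v ψ q (hcard ▸ heven) hq3 hv0 hvq hinj hS
    (by simp [ψ]) hψq hψ
    (by
      intro k hk
      have : M.hMatrix (v k) (v (k + 1)) = c k := by simp [c, hk]
      rw [this, hψs]
      have := hc0 k
      field_simp)
    (by
      intro k hk
      have h1 : M.hMatrix (v k) (v (k + 1)) = c k := by simp [c, hk]
      have h2 := hMatrix_mul M (hadj k hk)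
      rw [h1] at h2
      rw [hψs, eq_div_of_mul_eq (hc0 k) ((mul_comm _ _).trans h2)]
      have := hc0 k
      field_simp
      simp)
    (fun i h0 hi a ha => hnb i h0 hi a (hMatrix_adj M ha))
    (fun i h0 hi a ha => hnb i h0 hi a (hMatrix_adj M ha).symm)
  rw [hcard]
  exact key.trans (congrArg (fun n => q + n) (hRank_induce M _ _ _ _).symm)

end WalkData

/-- Let G̃ have pairwise vertex-disjoint cycles, no pendant
vertices, and a pendant even cycle C̃_q with σ(C̃_q) ≡ q (mod 4), with unique
degree-3 vertex x on C_q; let H̃ = G̃ − V(C_q) + x. If r(G̃) = 2m(G) − 2κ(G) + 1,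
then r(H̃) = 2m(H) − 2κ(H) + 1. -/
theorem pendant_even_cycle_reduction
    {V : Type u} [Fintype V] [DecidableEq V] (M : MixedGraph V)
    (hdisj : CyclesVertexDisjoint M.graph) (hnp : NoPendantVerts M.graph)
    (C : M.graph.Subgraph) (x : V) (hpc : IsPendantCycle M.graph C x)
    (heven : Even C.verts.ncard)
    (hsig : CycleSig M C (fun s => s % 4 = C.verts.ncard % 4))
    (hr : (M.hRank : ℤ) =
      2 * (matchingNumber M.graph : ℤ) - 2 * (evenCycleCount M.graph : ℤ) + 1) :
    ((M.induce (C.vertsᶜ ∪ {x})).hRank : ℤ) =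
      2 * (matchingNumber (M.induce (C.vertsᶜ ∪ {x})).graph : ℤ) -
        2 * (evenCycleCount (M.induce (C.vertsᶜ ∪ {x})).graph : ℤ) + 1 := by
  have h1 := rank_pendant_even M C x hpc heven hsig
  obtain ⟨hC, hxC, hdx, hdeg⟩ := hpc
  have hW : ∀ a b, M.graph.Adj a b → (a ∈ C.verts ∧ b ∈ C.verts) ∨
      (a ∈ C.vertsᶜ ∪ {x} ∧ b ∈ C.vertsᶜ ∪ {x}) := by
    have hnb : ∀ a b, M.graph.Adj a b → a ∈ C.verts → a ≠ x → b ∈ C.verts := by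
      intro a b hab ha hax
      have hsub : {w | C.Adj a w} ⊆ {w | M.graph.Adj a w} := fun w hw => C.adj_sub hw
      have heq := Set.eq_of_subset_of_ncard_le hsub
        (by rw [hC.2 a ha, hdeg a ha hax]) (Set.toFinite _)
      have hb : b ∈ {w | C.Adj a w} := by rw [heq]; exact hab
      exact C.edge_vert (SimpleGraph.Subgraph.Adj.symm hb)
    intro a b hab
    by_cases ha : a ∈ C.verts ∧ a ≠ x
    · exact Or.inl ⟨ha.1, hnb a b hab ha.1 ha.2⟩
    · by_cases hb : b ∈ C.verts ∧ b ≠ x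
      · exact Or.inl ⟨hnb b a hab.symm hb.1 hb.2, hb.1⟩
      · right
        simp only [Set.mem_union, Set.mem_compl_iff, Set.mem_singleton_iff]
        tauto
  have hCS : ¬ C.verts ⊆ C.vertsᶜ ∪ {x} := by
    intro hsub
    have hne : {w | C.Adj x w}.Nonempty := by
      rw [← Set.ncard_pos (Set.toFinite _), hC.2 x hxC]
      norm_num
    obtain ⟨w, hw⟩ := hne
    have hwx : C.Adj x w := hw
    have hwC : w ∈ C.verts := C.edge_vert hwx.symm
    rcases hsub hwC with h | h
    · exact h hwC
    · exact (C.adj_sub hwx).ne h.symm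
  have h2 := matchingNumber_le C.verts (C.vertsᶜ ∪ {x}) hW
  have h3 := evenCycleCount_eq hdisj C hC heven (C.vertsᶜ ∪ {x}) Set.subset_union_left hCS
  have h4 := rank_lower_bound (M.induce (C.vertsᶜ ∪ {x}))
  change 2 * matchingNumber M.graph ≤
    2 * matchingNumber (M.induce (C.vertsᶜ ∪ {x})).graph + C.verts.ncard at h2
  change evenCycleCount M.graph =
    evenCycleCount (M.induce (C.vertsᶜ ∪ {x})).graph + 1 at h3
  obtain ⟨k, hk⟩ := heven
  omega

end MixedPaper
end

section
/- Let G~ be a mixed graph whose cycles are pairwise vertex-disjoint and whose underlying graph G contains no odd cycles. Then r(G~) ≠ 2m(G) − 2κ(G) + 1. -/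
open scoped Classical

namespace MixedPaper

universe u

variable {V : Type u}

theorem even_cons_of_isPath {V : Type u} {G : SimpleGraph V}
    (hc : ∀ (u : V) (w : G.Walk u u), w.IsCycle → Even w.length)
    {u v : V} (h : G.Adj u v) (p : G.Walk v u) (hp : p.IsPath) : Even (p.length + 1) := by
  by_cases he : s(u, v) ∈ p.edges
  · cases p with
    | nil => exact absurd h (G.loopless.irrefl _)
    | cons h' q =>
      rw [SimpleGraph.Walk.cons_isPath_iff] at hp
      rw [SimpleGraph.Walk.edges_cons, List.mem_cons] at he
      rcases he with he | he
      · rw [Sym2.eq_iff] at he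
        rcases he with ⟨h1, h2⟩ | ⟨h1, h2⟩
        · exact absurd h1 h.ne
        · subst h1
          have := SimpleGraph.Walk.isPath_iff_eq_nil.1 hp.1
          subst this
          simp
      · exact absurd (q.snd_mem_support_of_mem_edges he) hp.2
  · exact hc u (SimpleGraph.Walk.cons h p) ((SimpleGraph.Walk.cons_isCycle_iff p h).2 ⟨hp, he⟩)

theorem even_bypass {V : Type u} {G : SimpleGraph V}
    (hc : ∀ (u : V) (w : G.Walk u u), w.IsCycle → Even w.length)
    {u v : V} (p : G.Walk u v) : Even (p.length + p.bypass.length) := by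
  induction p with
  | nil => simp [SimpleGraph.Walk.bypass]
  | @cons a b c h p ih =>
    rw [SimpleGraph.Walk.bypass]
    split_ifs with hs
    · have h1 := even_cons_of_isPath hc h (p.bypass.takeUntil _ hs)
        (p.bypass_isPath.takeUntil hs)
      have h2 := congrArg SimpleGraph.Walk.length (p.bypass.take_spec hs)
      rw [SimpleGraph.Walk.length_append] at h2
      rw [SimpleGraph.Walk.length_cons]
      grind
    · rw [SimpleGraph.Walk.length_cons, SimpleGraph.Walk.length_cons]
      grind

theorem even_loop {V : Type u} {G : SimpleGraph V}
    (hc : ∀ (u : V) (w : G.Walk u u), w.IsCycle → Even w.length)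
    {u : V} (p : G.Walk u u) : Even p.length := by
  have h := even_bypass hc p
  rw [SimpleGraph.Walk.isPath_iff_eq_nil.1 p.bypass_isPath] at h
  simpa using h

theorem even_cycle {V : Type u} {G : SimpleGraph V}
    (hno : ∀ C : G.Subgraph, IsCycleSubgraph C → ¬ Odd C.verts.ncard)
    (u : V) (w : G.Walk u u) (hw : w.IsCycle) : Even w.length := by
  have h1 : IsCycleSubgraph w.toSubgraph :=
    ⟨w.toSubgraph_connected, fun v hv =>
      hw.ncard_neighborSet_toSubgraph_eq_two ((w.mem_verts_toSubgraph).1 hv)⟩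
  have h2 := hno _ h1
  have h3 : w.toSubgraph.verts = (w.support.tail.toFinset : Set V) := by
    ext x
    rw [w.mem_verts_toSubgraph, List.coe_toFinset]
    constructor
    · intro hx
      rcases SimpleGraph.Walk.mem_support_iff w |>.1 hx with rfl | hx
      · exact w.end_mem_tail_support hw.not_nil
      · exact hx
    · intro hx
      exact List.mem_of_mem_tail hx
  rw [h3, Set.ncard_coe_finset, List.toFinset_card_of_nodup hw.support_nodup] at h2
  simpa using h2

open scoped ComplexOrder in
theorem even_rank {V : Type u} [Fintype V] [DecidableEq V] (H P Q : Matrix V V ℂ)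
    (hH : H.conjTranspose = H) (hP : P.conjTranspose = P) (hPQ : P + Q = 1)
    (hPQ0 : P * Q = 0) (hPP : P * P = P) (h1 : P * H = H * Q) (h2 : Q * H = H * P) :
    Even H.rank := by
  have hr : H.rank = (P * H).rank + (Q * H).rank := by
    have hsup : LinearMap.range H.mulVecLin =
        LinearMap.range (P * H).mulVecLin ⊔ LinearMap.range (Q * H).mulVecLin := by
      apply le_antisymm
      · rintro _ ⟨x, rfl⟩
        have : H.mulVecLin x = (P * H).mulVecLin x + (Q * H).mulVecLin x := by
          simp only [Matrix.mulVecLin_apply, ← Matrix.add_mulVec, ← Matrix.add_mul, hPQ,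
            Matrix.one_mul]
        rw [this]
        exact Submodule.add_mem_sup ⟨x, rfl⟩ ⟨x, rfl⟩
      · rw [h1, h2, Matrix.mulVecLin_mul, Matrix.mulVecLin_mul]
        exact sup_le (LinearMap.range_comp_le_range _ _) (LinearMap.range_comp_le_range _ _)
    have hinf : LinearMap.range (P * H).mulVecLin ⊓ LinearMap.range (Q * H).mulVecLin = ⊥ := by
      rw [eq_bot_iff]
      rintro y ⟨⟨a, ha⟩, ⟨b, hb⟩⟩
      have e1 : P.mulVec y = y := by
        rw [← ha, Matrix.mulVecLin_apply, Matrix.mulVec_mulVec, ← Matrix.mul_assoc, hPP]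
      have e2 : P.mulVec y = 0 := by
        rw [← hb, Matrix.mulVecLin_apply, Matrix.mulVec_mulVec, ← Matrix.mul_assoc, hPQ0]
        simp
      rw [Submodule.mem_bot, ← e1, e2]
    have := Submodule.finrank_sup_add_finrank_inf_eq (LinearMap.range (P * H).mulVecLin)
      (LinearMap.range (Q * H).mulVecLin)
    rw [hinf, ← hsup, finrank_bot, add_zero] at this
    exact this
  have h3 : (Q * H).rank = (P * H).rank := by
    rw [← Matrix.rank_conjTranspose (P * H), Matrix.conjTranspose_mul, hH, hP, h2]
  exact ⟨_, by rw [hr, h3]⟩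

theorem hRank_even {V : Type u} [Fintype V] [DecidableEq V] (M : MixedGraph V)
    (c : M.graph.Coloring (Fin 2)) : Even M.hRank := by
  have hz : ∀ x y, c x = c y → M.hMatrix x y = 0 := by
    intro x y h
    have hn : ¬ M.graph.Adj x y := fun hadj => c.valid hadj h
    have hn' : ¬ M.graph.Adj y x := fun hadj => hn hadj.symm
    have ha : ¬ M.arc x y := fun h => hn (M.arc_adj _ _ h)
    have hb : ¬ M.arc y x := fun h => hn' (M.arc_adj _ _ h)
    simp [MixedGraph.hMatrix, hn, ha, hb]
  refine even_rank M.hMatrix (Matrix.diagonal fun x => if c x = 0 then 1 else 0)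
    (Matrix.diagonal fun x => if c x = 0 then 0 else 1) ?_ ?_ ?_ ?_ ?_ ?_ ?_
  · ext x y
    have := M.arc_antisymm x y
    by_cases h1 : M.arc x y <;> by_cases h2 : M.arc y x <;>
      simp_all [MixedGraph.hMatrix, Matrix.conjTranspose_apply, M.graph.adj_comm x y]
  · rw [Matrix.diagonal_conjTranspose]
    congr 1
    ext x
    simp only [Pi.star_apply]
    split_ifs <;> simp
  · rw [Matrix.diagonal_add, ← Matrix.diagonal_one]
    congr 1
    ext x
    split_ifs <;> simp
  · rw [Matrix.diagonal_mul_diagonal, ← Matrix.diagonal_zero]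
    congr 1
    ext x
    split_ifs <;> simp
  · rw [Matrix.diagonal_mul_diagonal]
    congr 1
    ext x
    split_ifs <;> simp
  · ext x y
    rw [Matrix.diagonal_mul, Matrix.mul_diagonal]
    have := hz x y
    split_ifs <;> simp <;> (first | (apply this; omega) | (symm; apply this; omega))
  · ext x y
    rw [Matrix.diagonal_mul, Matrix.mul_diagonal]
    have := hz x y
    split_ifs <;> simp <;> (first | (apply this; omega) | (symm; apply this; omega))

/-- Let G̃ be a mixed graph with pairwise vertex-disjoint cycles
whose underlying graph contains no odd cycles. Then r(G̃) ≠ 2m(G) − 2κ(G) + 1. -/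
theorem hRank_ne_lower_bound_add_one_of_no_odd_cycles
    {V : Type u} [Fintype V] [DecidableEq V] (M : MixedGraph V)
    (hdisj : CyclesVertexDisjoint M.graph)
    (hno : ∀ C : M.graph.Subgraph, IsCycleSubgraph C → ¬ Odd C.verts.ncard) :
    (M.hRank : ℤ) ≠
      2 * (matchingNumber M.graph : ℤ) - 2 * (evenCycleCount M.graph : ℤ) + 1 := by
  obtain ⟨c⟩ := SimpleGraph.two_colorable_iff_forall_loop_even.2
    (fun u w => even_loop (even_cycle hno) w)
  obtain ⟨k, hk⟩ := hRank_even M c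
  rw [hk]
  push_cast
  omega

end MixedPaper
end
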